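/- arXiv:2306.03281 — 4 statements merged into one kernel-verified Lean document; each statement's English description precedes it below -/
import Mathlib

section
/- Let m be a positive integer. Every subset S of Q̄^m that is closed under complex conjugation and contains the origin (0,…,0) is the exceptional set of uncountably many transcendental entire functions f ∈ ℚ[[z₁,…,z_m]]; that is, the set of entire functions f : ℂ^m → ℂ that are transcendental over ℂ(z₁,…,z_m), belong to ℚ[[z₁,…,z_m]], and satisfy S_f = S, is uncountable. -/
open scoped BigOperators

/-- Inductive adjustment: simultaneous realisation of dense targets by a triangular system. -/
lemma exists_adjusted {K : Type*} (w : K → ℝ) (hw : ∀ k, 0 < w k) (l : ℕ → K → ℝ)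
    (hsum : ∀ n, Summable fun k => w k * |l n k|) (A : ℕ → Set ℝ) (hA : ∀ n, Dense (A n))
    (u : ℕ → K →₀ ℝ) (hu1 : ∀ n, ((u n).sum fun k a => a * l n k) = 1)
    (hu0 : ∀ n j, j < n → ((u n).sum fun k a => a * l j k) = 0) :
    ∃ c : K → ℝ, (∀ k, |c k - w k| ≤ w k / 2) ∧ ∀ n, (∑' k, c k * l n k) ∈ A n := by
  have hC : ∀ n, ∃ C : ℝ, 0 < C ∧ ∀ k, |u n k| ≤ C * w k := by
    intro n
    refine ⟨∑ k ∈ (u n).support, |u n k| / w k + 1, ?_, ?_⟩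
    · have : 0 ≤ ∑ k ∈ (u n).support, |u n k| / w k :=
        Finset.sum_nonneg fun k _ => div_nonneg (abs_nonneg _) (hw k).le
      linarith
    · intro k
      by_cases hk : k ∈ (u n).support
      · have h1 : |u n k| / w k ≤ ∑ k ∈ (u n).support, |u n k| / w k :=
          Finset.single_le_sum (f := fun k => |u n k| / w k)
            (fun k _ => div_nonneg (abs_nonneg _) (hw k).le) hk
        have h2 : |u n k| / w k ≤ ∑ k ∈ (u n).support, |u n k| / w k + 1 := by linarith
        rwa [div_le_iff₀ (hw k)] at h2
      · have : u n k = 0 := by simpa using hk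
        rw [this, abs_zero]
        refine mul_nonneg ?_ (hw k).le
        have : 0 ≤ ∑ k ∈ (u n).support, |u n k| / w k :=
          Finset.sum_nonneg fun k _ => div_nonneg (abs_nonneg _) (hw k).le
        linarith
  choose C hC0 hC using hC
  have hstep : ∀ (n : ℕ) (x : ℝ), ∃ t : ℝ, |t| ≤ (1/2)^(n+2) / C n ∧ x + t ∈ A n := by
    intro n x
    have he : 0 < (1/2 : ℝ)^(n+2) / C n := by have := hC0 n; positivity
    obtain ⟨y, hy, hyx⟩ := (hA n).exists_dist_lt x he
    refine ⟨y - x, ?_, by simpa using hy⟩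
    rw [dist_comm, Real.dist_eq] at hyx
    exact hyx.le
  choose t ht htA using hstep
  let L : ℕ → (K →₀ ℝ) → ℝ := fun n v => v.sum fun k a => a * l n k
  have Ladd : ∀ n v v', L n (v + v') = L n v + L n v' := by
    intro n v v'
    exact Finsupp.sum_add_index' (by simp) (by intros; ring)
  have Lsmul : ∀ n (a : ℝ) v, L n (a • v) = a * L n v := by
    intro n a v
    simp only [L]
    rw [Finsupp.sum_smul_index (by simp), Finsupp.mul_sum]
    simp only [mul_assoc]
  let s : ℕ → (K →₀ ℝ) := fun n => Nat.rec 0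
    (fun n v => v + t n ((∑' k, w k * l n k) + L n v) • u n) n
  let τ : ℕ → ℝ := fun n => t n ((∑' k, w k * l n k) + L n (s n))
  have hs : ∀ n, s (n+1) = s n + τ n • u n := fun n => rfl
  have hL : ∀ n N, L n (s N) = ∑ j ∈ Finset.range N, τ j * L n (u j) := by
    intro n N
    induction N with
    | zero => simp [s, L]
    | succ N ih => rw [hs, Ladd, Lsmul, ih, Finset.sum_range_succ]
  have hτ : ∀ j k, |τ j * u j k| ≤ (1/2)^(j+2) * w k := by
    intro j k
    rw [abs_mul]
    calc |τ j| * |u j k| ≤ ((1/2)^(j+2) / C j) * (C j * w k) :=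
          mul_le_mul (ht _ _) (hC j k) (abs_nonneg _) (by have := hC0 j; positivity)
      _ = _ := by have := (hC0 j).ne'; field_simp
  have hgeo : HasSum (fun j : ℕ => (1/2 : ℝ)^(j+2)) (1/2) := by
    have h0 := (hasSum_geometric_two).mul_left (1/4 : ℝ)
    have e1 : (fun j : ℕ => (1/2 : ℝ)^(j+2)) = fun i : ℕ => 1 / 4 * (1 / 2 : ℝ) ^ i := by
      funext j; rw [pow_add]; ring
    have e2 : (1/2 : ℝ) = 1/4 * 2 := by norm_num
    rw [e1]
    exact e2 ▸ h0
  have hτs : ∀ k, Summable fun j => τ j * u j k := fun k =>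
    Summable.of_norm_bounded (hgeo.summable.mul_right (w k)) (fun j => hτ j k)
  have hd : ∀ k, |∑' j, τ j * u j k| ≤ w k / 2 := by
    intro k
    have := tsum_of_norm_bounded (f := fun j => τ j * u j k) (hgeo.mul_right (w k))
      (fun j => hτ j k)
    rw [Real.norm_eq_abs] at this
    linarith
  refine ⟨fun k => w k + ∑' j, τ j * u j k, fun k => by simpa using hd k, fun n => ?_⟩
  have hws : Summable fun k => w k * l n k := by
    refine Summable.of_norm_bounded (hsum n) fun k => ?_
    rw [Real.norm_eq_abs, abs_mul, abs_of_pos (hw k)]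
  have hprod : Summable (Function.uncurry fun (k : K) (j : ℕ) => τ j * u j k * l n k) := by
    have hp := (hsum n).mul_of_nonneg hgeo.summable
      (fun k => mul_nonneg (hw k).le (abs_nonneg _)) (fun j => by positivity)
    refine Summable.of_norm_bounded hp ?_
    rintro ⟨k, j⟩
    simp only [Function.uncurry]
    rw [Real.norm_eq_abs, abs_mul]
    calc _ ≤ (1/2)^(j+2) * w k * |l n k| := mul_le_mul_of_nonneg_right (hτ j k) (abs_nonneg _)
      _ = _ := by ring
  have hds : Summable fun k => (∑' j, τ j * u j k) * l n k := by
    refine Summable.of_norm_bounded (hsum n) fun k => ?_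
    rw [Real.norm_eq_abs, abs_mul]
    refine mul_le_mul_of_nonneg_right ((hd k).trans ?_) (abs_nonneg _)
    linarith [hw k]
  have e1 : ∑' k, (w k + ∑' j, τ j * u j k) * l n k
      = (∑' k, w k * l n k) + ∑' k, (∑' j, τ j * u j k) * l n k := by
    rw [← hws.tsum_add hds]
    simp only [add_mul]
  have e2 : ∑' k, (∑' j, τ j * u j k) * l n k = ∑' j, τ j * L n (u j) := by
    simp only [← tsum_mul_right]
    rw [← hprod.tsum_comm]
    refine tsum_congr fun j => ?_
    simp only [L, mul_assoc, tsum_mul_left]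
    congr 1
    rw [Finsupp.sum, tsum_eq_sum]
    intro k hk
    have : u j k = 0 := by simpa using hk
    simp [this]
  have e3 : ∑' j, τ j * L n (u j) = L n (s n) + τ n := by
    rw [tsum_eq_sum (s := Finset.range (n+1)), Finset.sum_range_succ, hL]
    · have : L n (u n) = 1 := hu1 n
      rw [this, mul_one]
    · intro j hj
      have : L n (u j) = 0 := hu0 j n (by simpa using hj)
      rw [this, mul_zero]
  rw [e1, e2, e3, ← add_assoc]
  exact htA n _

lemma summable_monomials {m : ℕ} (r : Fin m → ℝ) (hr : ∀ i, 0 ≤ r i) :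
    Summable fun k : Fin m → ℕ => (∏ i, ((k i).factorial : ℝ)⁻¹) * ∏ i, r i ^ k i := by
  refine summable_of_sum_le (c := ∏ i, Real.exp (r i)) ?_ ?_
  · intro k
    exact mul_nonneg (Finset.prod_nonneg fun i _ => by positivity)
      (Finset.prod_nonneg fun i _ => pow_nonneg (hr i) _)
  · intro s
    let N := ∑ k ∈ s, ∑ i, k i
    have hs : s ⊆ Fintype.piFinset fun _ : Fin m => Finset.range (N + 1) := by
      intro k hk
      rw [Fintype.mem_piFinset]
      intro i
      have h1 : k i ≤ ∑ i, k i := Finset.single_le_sum (f := k) (fun _ _ => Nat.zero_le _) (Finset.mem_univ i)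
      have h2 : ∑ i, k i ≤ N :=
        Finset.single_le_sum (f := fun k : Fin m → ℕ => ∑ i, k i) (fun _ _ => Nat.zero_le _) hk
      rw [Finset.mem_range]; omega
    calc _ ≤ ∑ k ∈ Fintype.piFinset fun _ : Fin m => Finset.range (N + 1),
          (∏ i, ((k i).factorial : ℝ)⁻¹) * ∏ i, r i ^ k i := by
          refine Finset.sum_le_sum_of_subset_of_nonneg hs fun k _ _ => ?_
          exact mul_nonneg (Finset.prod_nonneg fun i _ => by positivity)
            (Finset.prod_nonneg fun i _ => pow_nonneg (hr i) _)
      _ = ∏ i, ∑ j ∈ Finset.range (N + 1), (j.factorial : ℝ)⁻¹ * r i ^ j := by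
          rw [Finset.prod_univ_sum]
          simp only [Finset.prod_mul_distrib]
      _ ≤ _ := by
          refine Finset.prod_le_prod (fun i _ => Finset.sum_nonneg fun j _ =>
            mul_nonneg (by positivity) (pow_nonneg (hr i) _)) fun i _ => ?_
          have := Real.sum_le_exp_of_nonneg (hr i) (N + 1)
          refine le_trans (le_of_eq ?_) this
          refine Finset.sum_congr rfl fun j _ => ?_
          rw [div_eq_inv_mul]

lemma exists_word {m n : ℕ} (k : Fin m → ℕ) (hk : ∑ i, k i = n) :
    ∃ s : Fin n → Fin m, ∀ y : Fin m → ℂ, ∏ j, y (s j) = ∏ i, y i ^ k i := by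
  have e : (Σ i, Fin (k i)) ≃ Fin n := Fintype.equivFinOfCardEq (by simp [hk])
  refine ⟨fun j => (e.symm j).1, fun y => ?_⟩
  rw [e.symm.prod_comp (fun x => y x.1), Fintype.prod_sigma]
  simp

lemma analytic_of_bound {m : ℕ} (c : (Fin m → ℕ) → ℂ)
    (hc : ∀ r : ℝ, 0 ≤ r → Summable fun k : Fin m → ℕ => ‖c k‖ * ∏ i, r ^ k i)
    (f : (Fin m → ℂ) → ℂ)
    (hf : ∀ z : Fin m → ℂ, HasSum (fun k : Fin m → ℕ => c k * ∏ i, z i ^ k i) (f z)) (x) :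
    AnalyticAt ℂ f x := by
  have hword : ∀ (n : ℕ) (k : Fin m → ℕ), ∃ M : ContinuousMultilinearMap ℂ
      (fun _ : Fin n => (Fin m → ℂ)) ℂ, ‖M‖ ≤ 1 ∧
      (∑ i, k i = n → ∀ y, M (fun _ => y) = ∏ i, y i ^ k i) := by
    intro n k
    by_cases hk : ∑ i, k i = n
    · obtain ⟨s, hs⟩ := exists_word k hk
      refine ⟨(ContinuousMultilinearMap.mkPiAlgebra ℂ (Fin n) ℂ).compContinuousLinearMap
        (fun j => ContinuousLinearMap.proj (s j)), ?_, ?_⟩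
      · refine ContinuousMultilinearMap.opNorm_le_bound zero_le_one fun v => ?_
        simp only [ContinuousMultilinearMap.compContinuousLinearMap_apply,
          ContinuousMultilinearMap.mkPiAlgebra_apply, ContinuousLinearMap.proj_apply, norm_prod,
          one_mul]
        exact Finset.prod_le_prod (fun _ _ => norm_nonneg _) fun j _ => norm_le_pi_norm _ _
      · intro _ y
        simp [hs]
    · exact ⟨0, by simp, fun h => absurd h hk⟩
  choose M hM1 hM using hword
  let p : FormalMultilinearSeries ℂ (Fin m → ℂ) ℂ := fun n =>
    ∑ k ∈ Finset.univ.piAntidiag n, c k • M n k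
  have hfib : ∀ n : ℕ, ((fun k : Fin m → ℕ => ∑ i, k i) ⁻¹' {n}) =
      ((Finset.univ.piAntidiag n : Finset (Fin m → ℕ)) : Set (Fin m → ℕ)) := by
    intro n; ext k; simp
  have hp : HasFPowerSeriesOnBall f p 0 ⊤ := by
    refine ⟨?_, by simp, ?_⟩
    · rw [top_le_iff]
      refine p.radius_eq_top_of_summable_norm fun r => ?_
      have h1 := ((hc r r.2).hasSum.tsum_fiberwise (fun k : Fin m → ℕ => ∑ i, k i)).summable
      refine Summable.of_nonneg_of_le (fun n => by positivity) (fun n => ?_) h1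
      rw [hfib, Finset.tsum_subtype' _ (fun k : Fin m → ℕ => ‖c k‖ * ∏ i, (r : ℝ) ^ k i)]
      have : ‖p n‖ ≤ ∑ k ∈ Finset.univ.piAntidiag n, ‖c k‖ := by
        refine (norm_sum_le _ _).trans (Finset.sum_le_sum fun k _ => ?_)
        rw [norm_smul]
        exact mul_le_of_le_one_right (norm_nonneg _) (hM1 n k)
      refine (mul_le_mul_of_nonneg_right this (by positivity)).trans (le_of_eq ?_)
      rw [Finset.sum_mul]
      refine Finset.sum_congr rfl fun k hk => ?_
      rw [Finset.prod_pow_eq_pow_sum]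
      simp at hk
      rw [hk]
    · intro y _
      rw [zero_add]
      have h1 := (hf y).tsum_fiberwise (fun k : Fin m → ℕ => ∑ i, k i)
      convert h1 using 1
      ext n
      rw [hfib, Finset.tsum_subtype' _ (fun k : Fin m → ℕ => c k * ∏ i, y i ^ k i)]
      simp only [p, _root_.sum_apply, _root_.smul_apply, smul_eq_mul]
      refine Finset.sum_congr rfl fun k hk => ?_
      rw [hM n k (by simpa using hk)]
  exact hp.analyticAt_of_mem (by simp)

open Asymptotics Filter in
lemma poly_isBigO_one (a : Polynomial ℂ) (ha : a ≠ 0) :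
    (fun _ : ℝ => (1 : ℝ)) =O[atTop] fun t : ℝ => a.eval (t : ℂ) := by
  by_cases hd : 0 < a.degree
  · have h := a.tendsto_norm_atTop hd (l := atTop) (z := fun t : ℝ => (t : ℂ))
      (by simpa using tendsto_abs_atTop_atTop)
    rw [isBigO_iff]
    refine ⟨1, ?_⟩
    filter_upwards [h.eventually_ge_atTop 1] with t ht
    simpa using ht
  · rw [Polynomial.eq_C_of_degree_le_zero (not_lt.mp hd)]
    have h0 : a.coeff 0 ≠ 0 := by
      intro h
      apply ha
      rw [Polynomial.eq_C_of_degree_le_zero (not_lt.mp hd), h, Polynomial.C_0]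
    simp only [Polynomial.eval_C]
    exact isBigO_const_const _ h0 _

open Asymptotics Filter in
lemma poly_isBigO_pow (a : Polynomial ℂ) :
    (fun t : ℝ => a.eval (t : ℂ)) =O[atTop] fun t : ℝ => t ^ a.natDegree := by
  simp only [Polynomial.eval_eq_sum_range]
  refine IsBigO.fun_sum fun i hi => ?_
  refine IsBigO.const_mul_left ?_ _
  rw [isBigO_iff]
  refine ⟨1, ?_⟩
  filter_upwards [eventually_ge_atTop 1] with t ht
  rw [norm_pow, norm_pow, Complex.norm_real, one_mul, Real.norm_eq_abs, abs_of_nonneg (by linarith)]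
  exact pow_le_pow_right₀ ht (by simpa [Nat.lt_succ_iff] using hi)

open Asymptotics Filter in
lemma no_bivariate_relation (Q : Polynomial (Polynomial ℂ)) (hQ : Q ≠ 0) (g : ℝ → ℂ)
    (hg : ∀ N : ℕ, (fun t : ℝ => t ^ N) =O[atTop] g)
    (h : ∀ t : ℝ, Q.evalEval (t : ℂ) (g t) = 0) : False := by
  set e := Q.natDegree with he
  have hlead : Q.coeff e ≠ 0 := by simpa [he] using hQ
  have h1g : (fun _ : ℝ => (1 : ℂ)) =O[atTop] g := by
    have h0 : (fun _ : ℝ => (1 : ℂ)) =O[atTop] fun t : ℝ => t ^ 0 := by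
      rw [isBigO_iff]
      exact ⟨1, by simp⟩
    exact h0.trans (hg 0)
  have hpow : ∀ i, i ≤ e → (fun t => g t ^ i) =O[atTop] fun t => g t ^ e := by
    intro i hi
    have h2 := (isBigO_refl (fun t => g t ^ i) atTop).mul ((h1g.pow (e - i)))
    have h3 : ∀ t, g t ^ i * g t ^ (e - i) = g t ^ e := fun t => by
      rw [← pow_add, Nat.add_sub_cancel' hi]
    simp only [h3] at h2
    refine IsBigO.trans ?_ h2
    rw [isBigO_iff]
    exact ⟨1, by simp⟩
  have hterm : ∀ i, i < e → (fun t : ℝ => (Q.coeff i).eval (t : ℂ) * g t ^ i) =o[atTop]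
      fun t => g t ^ e := by
    intro i hi
    have h1 : (fun t : ℝ => (Q.coeff i).eval (t : ℂ)) =o[atTop] g := by
      refine (poly_isBigO_pow _).trans_isLittleO ?_
      refine IsLittleO.trans_isBigO ?_ (hg ((Q.coeff i).natDegree + 1))
      exact isLittleO_pow_pow_atTop_of_lt (Nat.lt_succ_self _)
    have h2 := h1.mul_isBigO (isBigO_refl (fun t => g t ^ i) atTop)
    refine h2.trans_isBigO ?_
    simp only [← pow_succ']
    exact hpow _ hi
  have hsum : (fun t : ℝ => ∑ i ∈ Finset.range e, (Q.coeff i).eval (t : ℂ) * g t ^ i) =o[atTop]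
      fun t => g t ^ e := IsLittleO.fun_sum fun i hi => hterm i (Finset.mem_range.mp hi)
  have hle : (fun t : ℝ => (Q.coeff e).eval (t : ℂ) * g t ^ e) =o[atTop] fun t => g t ^ e := by
    have : (fun t : ℝ => (Q.coeff e).eval (t : ℂ) * g t ^ e) =
        fun t : ℝ => - ∑ i ∈ Finset.range e, (Q.coeff i).eval (t : ℂ) * g t ^ i := by
      funext t
      have := h t
      rw [Polynomial.evalEval, Polynomial.eval_eq_sum_range (p := Q), Polynomial.eval_finsetSum,
        Finset.sum_range_succ] at this
      simp only [Polynomial.eval_mul, Polynomial.eval_pow, Polynomial.eval_C] at this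
      rw [← he] at this
      linear_combination this
    rw [this]
    exact hsum.neg_left
  have h5 := (poly_isBigO_one _ hlead).mul (isBigO_refl (fun t => g t ^ e) atTop |>.norm_left)
  have h6 : (fun t => g t ^ e) =o[atTop] fun t => g t ^ e := by
    have := h5.trans_isLittleO hle
    simp only [one_mul] at this
    exact this.of_norm_left
  have h7 : ∀ᶠ t in atTop, g t ^ e = 0 := by
    rw [isLittleO_iff] at h6
    filter_upwards [h6 (c := 1/2) (by norm_num)] with t ht
    have : ‖g t ^ e‖ ≤ 0 := by linarith [norm_nonneg (g t ^ e)]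
    exact norm_le_zero_iff.mp this
  have h8 := h1g.pow e
  obtain ⟨C, hC⟩ := isBigO_iff.mp h8
  obtain ⟨t, h1, h2⟩ := (h7.and hC).exists
  rw [h1] at h2
  norm_num at h2

open Asymptotics Filter in
lemma transcendental_of_pos {m : ℕ} (hm : 0 < m) (c : (Fin m → ℕ) → ℝ) (hc : ∀ k, 0 < c k)
    (f : (Fin m → ℂ) → ℂ)
    (hf : ∀ z : Fin m → ℂ, HasSum (fun k : Fin m → ℕ => (c k : ℂ) * ∏ i, z i ^ k i) (f z)) :
    ¬ (∃ P : MvPolynomial (Fin (m + 1)) ℂ, P ≠ 0 ∧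
            ∀ z : Fin m → ℂ, MvPolynomial.eval (Fin.snoc z (f z)) P = 0) := by
  rintro ⟨P, hP, hPf⟩
  have hinf : (((↑) : ℝ → ℂ) '' Set.Ioi 0).Infinite :=
    (Set.Ioi_infinite 0).image Complex.ofReal_injective.injOn
  obtain ⟨x, hx, hxP⟩ : ∃ x ∈ Set.pi Set.univ (fun _ : Fin (m+1) => ((↑) : ℝ → ℂ) '' Set.Ioi 0),
      MvPolynomial.eval x P ≠ 0 := by
    by_contra! hcon
    apply hP
    refine MvPolynomial.funext_set (fun _ => ((↑) : ℝ → ℂ) '' Set.Ioi 0) (fun _ => hinf) ?_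
    intro y hy
    rw [hcon y hy, map_zero]
  have hx' : ∀ i, ∃ d : ℝ, 0 < d ∧ (d : ℂ) = x i := fun i => hx i (Set.mem_univ i)
  choose D hD hDx using hx'
  let d : Fin m → ℝ := fun i => D i.castSucc
  have hd : ∀ i, 0 < d i := fun i => hD _
  let Q : Polynomial (Polynomial ℂ) := MvPolynomial.aeval
    (Fin.snoc (fun i => Polynomial.C (Polynomial.C (d i : ℂ) * Polynomial.X)) Polynomial.X
      : Fin (m+1) → Polynomial (Polynomial ℂ)) P
  have hQe : ∀ t w : ℂ, Q.evalEval t w =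
      MvPolynomial.eval (Fin.snoc (fun i => (d i : ℂ) * t) w : Fin (m+1) → ℂ) P := by
    intro t w
    have h1 : Q.evalEval t w = Polynomial.evalEvalRingHom t w Q := rfl
    rw [h1]
    simp only [Q]
    rw [MvPolynomial.aeval_def, MvPolynomial.hom_eval₂, MvPolynomial.eval, MvPolynomial.coe_eval₂Hom]
    congr 1
    · ext a; simp
    · funext i
      refine Fin.lastCases ?_ (fun i => ?_) i
      · simp
      · simp
  have hQ : Q ≠ 0 := by
    intro h
    apply hxP
    have := hQe 1 (x (Fin.last m))
    rw [h] at this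
    simp only [Polynomial.evalEval_zero, mul_one] at this
    rw [this]
    congr 2
    funext i
    refine Fin.lastCases ?_ (fun i => ?_) i
    · simp
    · simp [d, hDx]
  refine no_bivariate_relation Q hQ (fun t => f fun i => (d i : ℂ) * t) ?_ ?_
  · intro N
    let k : Fin m → ℕ := Pi.single ⟨0, hm⟩ N
    have hB : 0 < c k * ∏ i, d i ^ k i := mul_pos (hc k) (Finset.prod_pos fun i _ => pow_pos (hd i) _)
    rw [isBigO_iff]
    refine ⟨(c k * ∏ i, d i ^ k i)⁻¹, ?_⟩
    filter_upwards [eventually_ge_atTop 0] with t ht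
    rw [inv_mul_eq_div, le_div_iff₀ hB]
    have h1 := Complex.hasSum_re (hf fun i => (d i : ℂ) * t)
    have h2 : ∀ k : Fin m → ℕ, ((c k : ℂ) * ∏ i, ((d i : ℂ) * t) ^ k i).re =
        c k * ∏ i, (d i * t) ^ k i := by
      intro k
      rw [← Complex.ofReal_re (c k * ∏ i, (d i * t) ^ k i)]
      push_cast; rfl
    simp only [h2] at h1
    have h3 := le_hasSum h1 k fun k' _ => mul_nonneg (hc k').le
      (Finset.prod_nonneg fun i _ => pow_nonneg (mul_nonneg (hd i).le ht) _)
    refine le_trans ?_ ((le_trans h3 (Complex.re_le_norm _)))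
    simp only [mul_pow, Finset.prod_mul_distrib]
    rw [Finset.prod_pow_eq_pow_sum]
    have : ∑ i, k i = N := by simp [k]
    rw [this, Real.norm_eq_abs, abs_of_nonneg (by positivity)]
    exact le_of_eq (by ring)
  · intro t
    rw [hQe]
    exact hPf _

lemma exists_lagrange {m : ℕ} (α : Fin m → ℂ) (hα : α ≠ 0) (B : Finset (Fin m → ℂ)) (hB : α ∉ B)
    (F : Finset (Fin m →₀ ℕ)) : ∃ q : MvPolynomial (Fin m) ℂ, MvPolynomial.eval α q = 1 ∧
      (∀ β ∈ B, MvPolynomial.eval β q = 0) ∧ ∀ k ∈ F, MvPolynomial.coeff k q = 0 := by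
  obtain ⟨i, hi⟩ : ∃ i, α i ≠ 0 := by
    by_contra! h
    exact hα (funext h)
  have h1 : ∀ β ∈ B, ∃ p : MvPolynomial (Fin m) ℂ, MvPolynomial.eval α p = 1 ∧
      MvPolynomial.eval β p = 0 := by
    intro β hβ
    obtain ⟨j, hj⟩ : ∃ j, α j ≠ β j := by
      by_contra! h
      exact hB ((funext h : α = β) ▸ hβ)
    refine ⟨MvPolynomial.C (α j - β j)⁻¹ * (MvPolynomial.X j - MvPolynomial.C (β j)), ?_, ?_⟩
    · simp [inv_mul_cancel₀ (sub_ne_zero.mpr hj)]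
    · simp
  choose! p hp1 hp2 using h1
  let N := ∑ k ∈ F, k i + 1
  refine ⟨(∏ β ∈ B, p β) * MvPolynomial.monomial (Finsupp.single i N) ((α i ^ N)⁻¹), ?_, ?_, ?_⟩
  · rw [map_mul, map_prod, Finset.prod_eq_one hp1, MvPolynomial.eval_monomial]
    simp [hi]
  · intro β hβ
    rw [map_mul, map_prod, Finset.prod_eq_zero hβ (hp2 β hβ), zero_mul]
  · intro k hk
    rw [MvPolynomial.coeff_mul_monomial', if_neg]
    intro h
    have h2 := h i
    have h3 : k i ≤ ∑ k ∈ F, k i :=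
      Finset.single_le_sum (f := fun k : Fin m →₀ ℕ => k i) (fun _ _ => Nat.zero_le _) hk
    simp [N] at h2
    omega

/-- Coordinatewise complex conjugation. -/
noncomputable def cj {m : ℕ} (α : Fin m → ℂ) : Fin m → ℂ := fun i => (starRingEnd ℂ) (α i)

lemma cj_cj {m : ℕ} (α : Fin m → ℂ) : cj (cj α) = α := by
  funext i; simp [cj]

lemma exists_realify {m : ℕ} (q : MvPolynomial (Fin m) ℂ) : ∃ r : MvPolynomial (Fin m) ℝ,
    (∀ k, MvPolynomial.coeff k r = 2 * (MvPolynomial.coeff k q).re) ∧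
    ∀ z : Fin m → ℂ, MvPolynomial.aeval z r =
      MvPolynomial.eval z q + (starRingEnd ℂ) (MvPolynomial.eval (cj z) q) := by
  let r : MvPolynomial (Fin m) ℝ :=
    ∑ k ∈ q.support, MvPolynomial.monomial k (2 * (MvPolynomial.coeff k q).re)
  have hr : ∀ k, MvPolynomial.coeff k r = 2 * (MvPolynomial.coeff k q).re := by
    intro k
    simp only [r, MvPolynomial.coeff_sum, MvPolynomial.coeff_monomial]
    rw [Finset.sum_ite_eq']
    split_ifs with h
    · rfl
    · rw [MvPolynomial.notMem_support_iff.mp h]; simp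
  refine ⟨r, hr, fun z => ?_⟩
  have h1 : MvPolynomial.map (algebraMap ℝ ℂ) r = q + MvPolynomial.map (starRingEnd ℂ) q := by
    ext k
    rw [MvPolynomial.coeff_map, MvPolynomial.coeff_add, MvPolynomial.coeff_map, hr,
      Complex.add_conj]
    simp
  rw [MvPolynomial.aeval_def, ← MvPolynomial.eval_map, h1, map_add]
  congr 1
  have h2 : (starRingEnd ℂ) (MvPolynomial.eval (cj z) q) =
      MvPolynomial.eval (fun i => (starRingEnd ℂ) (cj z i)) (MvPolynomial.map (starRingEnd ℂ) q) := by
    rw [MvPolynomial.eval_map]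
    exact MvPolynomial.eval₂_comp_left (starRingEnd ℂ) (RingHom.id ℂ) (cj z) q
  rw [h2]
  congr 2
  exact (cj_cj z).symm

lemma exists_real_lagrange {m : ℕ} (α : Fin m → ℂ) (hα : α ≠ 0) (B : Finset (Fin m → ℂ))
    (hB : α ∉ B) (hBc : ∀ β ∈ B, cj β ∈ B)
    (F : Finset (Fin m →₀ ℕ)) (v : ℂ) : ∃ r : MvPolynomial (Fin m) ℝ,
      (cj α = α → MvPolynomial.aeval α r = ((2 * v.re : ℝ) : ℂ)) ∧
      (cj α ≠ α → MvPolynomial.aeval α r = v) ∧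
      (∀ β ∈ B, MvPolynomial.aeval β r = 0) ∧ ∀ k ∈ F, MvPolynomial.coeff k r = 0 := by
  classical
  by_cases h : cj α = α
  · obtain ⟨q, h1, h2, h3⟩ := exists_lagrange α hα B hB F
    obtain ⟨r, hr1, hr2⟩ := exists_realify (MvPolynomial.C v * q)
    refine ⟨r, ?_, fun h' => absurd h h', ?_, ?_⟩
    · intro _
      rw [hr2, h]
      simp [h1, Complex.add_conj]
    · intro β hβ
      rw [hr2]
      simp [h2 β hβ, h2 _ (hBc β hβ)]
    · intro k hk
      rw [hr1]
      simp [h3 k hk]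
  · obtain ⟨q, h1, h2, h3⟩ := exists_lagrange α hα (insert (cj α) B)
      (by simp [hB, Ne.symm h]) F
    obtain ⟨r, hr1, hr2⟩ := exists_realify (MvPolynomial.C v * q)
    refine ⟨r, fun h' => absurd h' h, ?_, ?_, ?_⟩
    · intro _
      rw [hr2]
      simp [h1, h2 (cj α) (by simp)]
    · intro β hβ
      rw [hr2]
      simp [h2 β (by simp [hβ]), h2 (cj β) (by simp [hBc β hβ])]
    · intro k hk
      rw [hr1]
      simp [h3 k hk]

/-- Evaluation tasks: real part (`false`) or imaginary part (`true`, nonreal points only). -/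
abbrev EvTask {m : ℕ} (R : Set (Fin m → ℂ)) : Type :=
  {p : (Fin m → ℂ) × Bool // p.1 ∈ R ∧ (p.2 = true → cj p.1 ≠ p.1)}

/-- The real linear functional attached to a task. -/
noncomputable def taskFun {m : ℕ} (R : Set (Fin m → ℂ)) :
    (Fin m →₀ ℕ) ⊕ EvTask R → (MvPolynomial (Fin m) ℝ →ₗ[ℝ] ℝ)
  | Sum.inl k => MvPolynomial.lcoeff ℝ k
  | Sum.inr p => (if p.1.2 = true then Complex.imLm else Complex.reLm) ∘ₗ
      (MvPolynomial.aeval p.1.1 : MvPolynomial (Fin m) ℝ →ₐ[ℝ] ℂ).toLinearMap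

lemma taskFun_linearIndependent {m : ℕ} (R : Set (Fin m → ℂ)) (hR0 : ∀ α ∈ R, α ≠ 0)
    (hRc : ∀ α ∈ R, cj α ∈ R → cj α = α) : LinearIndependent ℝ (taskFun R) := by
  classical
  rw [linearIndependent_iff']
  intro s g hg
  have happ : ∀ r : MvPolynomial (Fin m) ℝ, ∑ σ ∈ s, g σ * taskFun R σ r = 0 := by
    intro r
    have := congrArg (fun L : MvPolynomial (Fin m) ℝ →ₗ[ℝ] ℝ => L r) hg
    simpa using this
  have hev : ∀ p : EvTask R, Sum.inr p ∈ s → g (Sum.inr p) = 0 := by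
    rintro ⟨⟨α, b⟩, hαR, hb⟩ hps
    simp only at hαR hb
    let pts : Finset (Fin m → ℂ) := (s.toRight.image fun p => p.1.1).erase α
    let B := pts ∪ pts.image cj
    have hptsR : ∀ β ∈ pts, β ∈ R := by
      intro β hβ
      simp only [pts, Finset.mem_erase, Finset.mem_image] at hβ
      obtain ⟨_, p, _, rfl⟩ := hβ
      exact p.2.1
    have hptsα : α ∉ pts := by simp [pts]
    have hcα : cj α ∉ pts := by
      intro h
      have := hRc α hαR (hptsR _ h)
      rw [this] at h
      exact hptsα h
    obtain ⟨r, hr1, hr2, hr3, hr4⟩ := exists_real_lagrange α (hR0 α hαR) B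
      (by
        simp only [B, Finset.mem_union, Finset.mem_image, not_or]
        refine ⟨hptsα, ?_⟩
        rintro ⟨β, hβ, rfl⟩
        rw [cj_cj] at hcα
        exact hcα hβ)
      (by
        intro β hβ
        simp only [B, Finset.mem_union, Finset.mem_image] at hβ ⊢
        rcases hβ with hβ | ⟨γ, hγ, rfl⟩
        · exact Or.inr ⟨β, hβ, rfl⟩
        · left; rwa [cj_cj])
      s.toLeft (if b = true then Complex.I else 1)
    have h0 := happ r
    rw [Finset.sum_eq_single_of_mem _ hps] at h0
    · have hne : taskFun R (Sum.inr ⟨(α, b), hαR, hb⟩) r ≠ 0 := by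
        cases b with
        | false =>
          by_cases hc : cj α = α
          · simp [taskFun, hr1 hc]
          · simp [taskFun, hr2 hc]
        | true => simp [taskFun, hr2 (hb rfl)]
      exact (mul_eq_zero.mp h0).resolve_right hne
    · rintro (k | ⟨⟨β, b'⟩, hβR, hb'⟩) hσ hne
      · have : taskFun R (Sum.inl k) r = 0 := hr4 k (by simpa using hσ)
        rw [this, mul_zero]
      · by_cases hβ : β = α
        · subst hβ
          have hbb : b' ≠ b := by
            rintro rfl
            exact hne rfl
          have : taskFun R (Sum.inr ⟨(β, b'), hβR, hb'⟩) r = 0 := by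
            cases b with
            | false =>
              have : b' = true := by simpa using hbb
              subst this
              simp [taskFun, hr2 (hb' rfl)]
            | true =>
              have : b' = false := by simpa using hbb
              subst this
              simp [taskFun, hr2 (hb rfl)]
          rw [this, mul_zero]
        · have : MvPolynomial.aeval β r = 0 := by
            refine hr3 β (Finset.mem_union_left _ ?_)
            simp only [pts, Finset.mem_erase, Finset.mem_image]
            exact ⟨hβ, _, Finset.mem_toRight.mpr hσ, rfl⟩
          have : taskFun R (Sum.inr ⟨(β, b'), hβR, hb'⟩) r = 0 := by
            simp [taskFun, this]
          rw [this, mul_zero]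
  rintro (k | p) hs
  · have h0 := happ (MvPolynomial.monomial k 1)
    rw [Finset.sum_eq_single_of_mem _ hs] at h0
    · simpa [taskFun] using h0
    · rintro (k' | p) hσ hne
      · have : k ≠ k' := by rintro rfl; exact hne rfl
        simp [taskFun, MvPolynomial.coeff_monomial, this]
      · rw [hev p hσ, zero_mul]
  · exact hev p hs

lemma exists_dual_seq {V : Type*} [AddCommGroup V] [Module ℝ V] (L : ℕ → (V →ₗ[ℝ] ℝ))
    (hL : LinearIndependent ℝ L) (n : ℕ) : ∃ v : V, L n v = 1 ∧ ∀ j, j < n → L j v = 0 := by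
  have h1 : L n ∉ Submodule.span ℝ (Set.range fun j : Fin n => L j) := by
    have h2 := hL.notMem_span_image (s := Set.Iio n) (x := n) (by simp)
    intro h
    apply h2
    convert h using 2
    ext x
    simp only [Set.mem_image, Set.mem_range, Set.mem_Iio]
    exact ⟨fun ⟨j, hj, e⟩ => ⟨⟨j, hj⟩, e⟩, fun ⟨j, e⟩ => ⟨j, j.2, e⟩⟩
  have h3 : ¬ (⨅ j : Fin n, LinearMap.ker (L j)) ≤ LinearMap.ker (L n) := fun h =>
    h1 (mem_span_of_iInf_ker_le_ker h)
  obtain ⟨v, hv, hvn⟩ := SetLike.not_le_iff_exists.mp h3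
  simp only [Submodule.mem_iInf, LinearMap.mem_ker] at hv hvn
  refine ⟨(L n v)⁻¹ • v, by simp [hvn], fun j hj => ?_⟩
  have := hv ⟨j, hj⟩
  simp only at this
  simp [this]

lemma exists_coeffs {m : ℕ} (hm : 0 < m) (R : Set (Fin m → ℂ)) (hRcount : R.Countable)
    (hR0 : ∀ α ∈ R, α ≠ 0) (hRc : ∀ α ∈ R, cj α ∈ R → cj α = α)
    (A : (Fin m →₀ ℕ) ⊕ EvTask R → Set ℝ) (hA : ∀ τ, Dense (A τ)) :
    ∃ c : (Fin m → ℕ) → ℝ,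
      (∀ k, |c k - ∏ i, ((k i).factorial : ℝ)⁻¹| ≤ (∏ i, ((k i).factorial : ℝ)⁻¹) / 2) ∧
      (∀ k : Fin m →₀ ℕ, c k ∈ A (Sum.inl k)) ∧
      (∀ α (hα : α ∈ R), (∑' k : Fin m → ℕ, c k * (∏ i, α i ^ k i).re) ∈
        A (Sum.inr ⟨(α, false), hα, by simp⟩)) ∧
      (∀ α (hα : α ∈ R) (hc : cj α ≠ α), (∑' k : Fin m → ℕ, c k * (∏ i, α i ^ k i).im) ∈
        A (Sum.inr ⟨(α, true), hα, fun _ => hc⟩)) := by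
  classical
  have : Countable R := hRcount
  have : Countable (EvTask R) := by
    have hinj : Function.Injective
        (fun p : EvTask R => ((⟨p.1.1, p.2.1⟩ : R), p.1.2)) := by
      rintro ⟨⟨a, b⟩, h⟩ ⟨⟨a', b'⟩, h'⟩ he
      simp only [Prod.mk.injEq, Subtype.mk.injEq] at he
      obtain ⟨rfl, rfl⟩ := he
      rfl
    exact hinj.countable
  have : Nonempty (Fin m) := ⟨⟨0, hm⟩⟩
  have : Infinite ((Fin m →₀ ℕ) ⊕ EvTask R) := inferInstance
  obtain ⟨e⟩ := nonempty_denumerable_iff.mpr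
    ⟨(inferInstance : Countable ((Fin m →₀ ℕ) ⊕ EvTask R)), inferInstance⟩
  let E : ℕ ≃ (Fin m →₀ ℕ) ⊕ EvTask R := (Denumerable.eqv _).symm
  let l : (Fin m →₀ ℕ) ⊕ EvTask R → (Fin m →₀ ℕ) → ℝ := fun τ k =>
    taskFun R τ (MvPolynomial.monomial k 1)
  have hmon : ∀ (α : Fin m → ℂ) (k : Fin m →₀ ℕ),
      MvPolynomial.aeval α (MvPolynomial.monomial k (1 : ℝ)) = ∏ i, α i ^ k i := by
    intro α k
    rw [MvPolynomial.aeval_monomial, map_one, one_mul, Finsupp.prod_fintype]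
    simp
  let w : (Fin m →₀ ℕ) → ℝ := fun k => ∏ i, ((k i).factorial : ℝ)⁻¹
  have hw : ∀ k, 0 < w k := fun k => Finset.prod_pos fun i _ => by positivity
  have hsumα : ∀ α : Fin m → ℂ, Summable fun k : Fin m →₀ ℕ => w k * ∏ i, ‖α i‖ ^ k i := by
    intro α
    have h1 := (summable_monomials (fun i => ‖α i‖) fun i => norm_nonneg _).comp_injective
      (DFunLike.coe_injective : Function.Injective (fun k : Fin m →₀ ℕ => (k : Fin m → ℕ)))
    exact h1
  have hlk : ∀ k, l (Sum.inl k) = fun k' => if k' = k then 1 else 0 := by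
    intro k
    funext k'
    simp [l, taskFun, MvPolynomial.coeff_monomial]
  have hlf : ∀ α (hα : α ∈ R), l (Sum.inr ⟨(α, false), hα, by simp⟩) =
      fun k => (∏ i, α i ^ k i).re := by
    intro α hα
    funext k
    simp [l, taskFun, hmon]
  have hlt : ∀ α (hα : α ∈ R) (hc : cj α ≠ α), l (Sum.inr ⟨(α, true), hα, fun _ => hc⟩) =
      fun k => (∏ i, α i ^ k i).im := by
    intro α hα hc
    funext k
    simp [l, taskFun, hmon]
  have hsum : ∀ τ, Summable fun k => w k * |l τ k| := by
    rintro (k | ⟨⟨α, b⟩, hα, hb⟩)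
    · refine summable_of_ne_finset_zero (s := {k}) fun k' hk' => ?_
      rw [hlk]
      have : k' ≠ k := by simpa using hk'
      simp [this]
    · refine Summable.of_nonneg_of_le (fun k => mul_nonneg (hw k).le (abs_nonneg _))
        (fun k => mul_le_mul_of_nonneg_left ?_ (hw k).le) (hsumα α)
      have h1 : ∏ i, ‖α i‖ ^ k i = ‖∏ i, α i ^ k i‖ := by simp
      rw [h1]
      cases b with
      | false => rw [hlf α hα]; exact Complex.abs_re_le_norm _
      | true => rw [hlt α hα (hb rfl)]; exact Complex.abs_im_le_norm _
  have hLI : LinearIndependent ℝ (fun n => taskFun R (E n)) :=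
    (taskFun_linearIndependent R hR0 hRc).comp E E.injective
  choose v hv1 hv0 using exists_dual_seq _ hLI
  let u : ℕ → (Fin m →₀ ℕ) →₀ ℝ := fun n =>
    Finsupp.onFinset (v n).support (fun k => MvPolynomial.coeff k (v n))
      (fun k hk => MvPolynomial.mem_support_iff.mpr hk)
  have hu : ∀ n τ, ((u n).sum fun k a => a * l τ k) = taskFun R τ (v n) := by
    intro n τ
    rw [Finsupp.onFinset_sum _ (by simp)]
    conv_rhs => rw [← MvPolynomial.support_sum_monomial_coeff (v n), map_sum]
    refine Finset.sum_congr rfl fun k _ => ?_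
    rw [← smul_eq_mul, ← map_smul, MvPolynomial.smul_monomial]
    simp
  obtain ⟨c, hc1, hc2⟩ := exists_adjusted w hw (fun n => l (E n)) (fun n => hsum _)
    (fun n => A (E n)) (fun n => hA _) u (fun n => (hu n _).trans (hv1 n))
    (fun n j hj => (hu n _).trans (hv0 n j hj))
  have hc3 : ∀ τ, (∑' k, c k * l τ k) ∈ A τ := by
    intro τ
    have := hc2 (E.symm τ)
    simpa using this
  have htr : ∀ F : (Fin m → ℕ) → ℝ, ∑' k : Fin m → ℕ, c (Finsupp.equivFunOnFinite.symm k) * F k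
      = ∑' k : Fin m →₀ ℕ, c k * F k := by
    intro F
    rw [← (Finsupp.equivFunOnFinite (α := Fin m) (M := ℕ)).tsum_eq]
    simp only [Equiv.symm_apply_apply]
    rfl
  refine ⟨fun k => c (Finsupp.equivFunOnFinite.symm k), ?_, ?_, ?_, ?_⟩
  · intro k
    exact hc1 (Finsupp.equivFunOnFinite.symm k)
  · intro k
    have := hc3 (Sum.inl k)
    rw [hlk] at this
    simpa using this
  · intro α hα
    have := hc3 (Sum.inr ⟨(α, false), hα, by simp⟩)
    rw [hlf α hα] at this
    rw [htr (fun k => (∏ i, α i ^ k i).re)]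
    exact this
  · intro α hα hc
    have := hc3 (Sum.inr ⟨(α, true), hα, fun _ => hc⟩)
    rw [hlt α hα hc] at this
    rw [htr (fun k => (∏ i, α i ^ k i).im)]
    exact this
  
lemma isAlgebraic_ofReal {x : ℝ} : IsAlgebraic ℚ (x : ℂ) ↔ IsAlgebraic ℚ x :=
  isAlgebraic_algebraMap_iff (R := ℚ) (S := ℝ) (A := ℂ) Complex.ofReal_injective

lemma isAlgebraic_conj {z : ℂ} (h : IsAlgebraic ℚ z) : IsAlgebraic ℚ ((starRingEnd ℂ) z) :=
  h.algHom ((Complex.conjAe : ℂ ≃ₐ[ℝ] ℂ).restrictScalars ℚ : ℂ ≃ₐ[ℚ] ℂ).toAlgHom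

lemma isAlgebraic_re {z : ℂ} (h : IsAlgebraic ℚ z) : IsAlgebraic ℚ z.re := by
  rw [← isAlgebraic_ofReal, Complex.re_eq_add_conj, div_eq_mul_inv]
  refine (h.add (isAlgebraic_conj h)).mul ?_
  have : IsAlgebraic ℚ (algebraMap ℚ ℂ (2⁻¹)) := isAlgebraic_algebraMap _
  simpa using this

lemma isAlgebraic_of_parts {z : ℂ} (h1 : z.re ∈ Set.range ((↑) : ℚ → ℝ))
    (h2 : z.im ∈ Set.range ((↑) : ℚ → ℝ)) : IsAlgebraic ℚ z := by
  obtain ⟨a, ha⟩ := h1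
  obtain ⟨b, hb⟩ := h2
  rw [← Complex.re_add_im z, ← ha, ← hb]
  have hI : IsAlgebraic ℚ Complex.I := by
    refine ⟨Polynomial.X ^ 2 + 1, ?_, by simp⟩
    intro h
    have := congrArg (Polynomial.eval 0) h
    simp at this
  have ha' : IsAlgebraic ℚ ((a : ℝ) : ℂ) := by
    have : IsAlgebraic ℚ (algebraMap ℚ ℂ a) := isAlgebraic_algebraMap _
    simpa using this
  have hb' : IsAlgebraic ℚ ((b : ℝ) : ℂ) := by
    have : IsAlgebraic ℚ (algebraMap ℚ ℂ b) := isAlgebraic_algebraMap _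
    simpa using this
  exact ha'.add (hb'.mul hI)

/-- every subset `S` of `Q̄^m` closed under complex conjugation and
containing the origin is the exceptional set of uncountably many transcendental
entire functions `f ∈ ℚ[[z₁,…,z_m]]`. -/
theorem exceptional_set_of_transcendental_entire_functions
    (m : ℕ) (hm : 0 < m) (S : Set (Fin m → ℂ))
    (hSalg : ∀ z ∈ S, ∀ i, IsAlgebraic ℚ (z i))
    (hSconj : ∀ z ∈ S, (fun i => (starRingEnd ℂ) (z i)) ∈ S)
    (hS0 : (0 : Fin m → ℂ) ∈ S) :
    ¬ ({f : (Fin m → ℂ) → ℂ |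
        (∀ x, AnalyticAt ℂ f x) ∧
        ¬ (∃ P : MvPolynomial (Fin (m + 1)) ℂ, P ≠ 0 ∧
            ∀ z : Fin m → ℂ, MvPolynomial.eval (Fin.snoc z (f z)) P = 0) ∧
        (∃ c : (Fin m → ℕ) → ℂ, (∀ k, c k ∈ Set.range ((↑) : ℚ → ℂ)) ∧
            ∀ z : Fin m → ℂ, HasSum (fun k : Fin m → ℕ => c k * ∏ i, z i ^ k i) (f z)) ∧
        {z : Fin m → ℂ | (∀ i, IsAlgebraic ℚ (z i)) ∧ IsAlgebraic ℚ (f z)} = S}).Countable := by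
  classical
  intro hcount
  obtain ⟨g, hg⟩ := Set.countable_iff_exists_subset_range.mp hcount
  -- enumeration of the algebraic points
  have halgc : {z : Fin m → ℂ | ∀ i, IsAlgebraic ℚ (z i)}.Countable := by
    have h1 := Set.countable_univ_pi (s := fun _ : Fin m => {x : ℂ | IsAlgebraic ℚ x})
      (fun _ => Algebraic.countable ℚ ℂ)
    refine h1.mono fun z hz => ?_
    intro i _
    exact hz i
  obtain ⟨enc, henc⟩ := Set.countable_iff_exists_injOn.mp halgc
  have halgcj : ∀ z : Fin m → ℂ, (∀ i, IsAlgebraic ℚ (z i)) → ∀ i, IsAlgebraic ℚ (cj z i) :=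
    fun z hz i => isAlgebraic_conj (hz i)
  let R : Set (Fin m → ℂ) := {α | (∀ i, IsAlgebraic ℚ (α i)) ∧ α ≠ 0 ∧ enc α ≤ enc (cj α)}
  have hRc : ∀ α ∈ R, cj α ∈ R → cj α = α := by
    intro α hα hα'
    have h1 := hα'.2.2
    rw [cj_cj] at h1
    exact henc hα'.1 hα.1 (le_antisymm h1 hα.2.2)
  have hQd : Dense (Set.range ((↑) : ℚ → ℝ)) := Rat.denseRange_cast
  have hTd : Dense {x : ℝ | ¬ IsAlgebraic ℚ x} := (Algebraic.countable ℚ ℝ).dense_compl ℝ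
  let A : (Fin m →₀ ℕ) ⊕ EvTask R → Set ℝ := fun τ => match τ with
    | Sum.inl _ => Set.range ((↑) : ℚ → ℝ)
    | Sum.inr ⟨(α, true), _⟩ => Set.range ((↑) : ℚ → ℝ)
    | Sum.inr ⟨(α, false), _⟩ =>
        (if α ∈ S then Set.range ((↑) : ℚ → ℝ) else {x : ℝ | ¬ IsAlgebraic ℚ x}) \
          {(g (⌊(α ⟨0, hm⟩).re⌋₊ - 1) α).re}
  have hA : ∀ τ, Dense (A τ) := by
    rintro (k | ⟨⟨α, b⟩, h⟩)
    · exact hQd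
    · cases b with
      | true => exact hQd
      | false =>
        refine Dense.sdiff_singleton ?_ _
        split_ifs
        · exact hQd
        · exact hTd
  obtain ⟨c, hc1, hc2, hc3, hc4⟩ := exists_coeffs hm R (halgc.mono fun α hα => hα.1)
    (fun α hα => hα.2.1) hRc A hA
  have hw : ∀ k : Fin m → ℕ, 0 < ∏ i, ((k i).factorial : ℝ)⁻¹ :=
    fun k => Finset.prod_pos fun i _ => by positivity
  have hcpos : ∀ k, 0 < c k := by
    intro k
    have h1 := abs_le.mp (hc1 k)
    linarith [hw k, h1.1]
  have hcle : ∀ k, c k ≤ 2 * ∏ i, ((k i).factorial : ℝ)⁻¹ := by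
    intro k
    have h1 := abs_le.mp (hc1 k)
    linarith [hw k, h1.2]
  have hcq : ∀ k, c k ∈ Set.range ((↑) : ℚ → ℝ) := by
    intro k
    exact hc2 (Finsupp.equivFunOnFinite.symm k)
  have hsr : ∀ r : Fin m → ℝ, (∀ i, 0 ≤ r i) →
      Summable fun k : Fin m → ℕ => c k * ∏ i, r i ^ k i := by
    intro r hr
    refine Summable.of_nonneg_of_le (fun k => mul_nonneg (hcpos k).le
      (Finset.prod_nonneg fun i _ => pow_nonneg (hr i) _)) (fun k => ?_)
      ((summable_monomials r hr).mul_left 2)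
    rw [← mul_assoc]
    exact mul_le_mul_of_nonneg_right (hcle k) (Finset.prod_nonneg fun i _ => pow_nonneg (hr i) _)
  let f : (Fin m → ℂ) → ℂ := fun z => ∑' k : Fin m → ℕ, (c k : ℂ) * ∏ i, z i ^ k i
  have hf : ∀ z : Fin m → ℂ, HasSum (fun k : Fin m → ℕ => (c k : ℂ) * ∏ i, z i ^ k i) (f z) := by
    intro z
    refine Summable.hasSum ?_
    refine Summable.of_norm_bounded (hsr (fun i => ‖z i‖) fun i => norm_nonneg _) fun k => ?_
    rw [norm_mul, Complex.norm_real, Real.norm_eq_abs, abs_of_pos (hcpos k), norm_prod]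
    simp
  have hre : ∀ z, (f z).re = ∑' k : Fin m → ℕ, c k * (∏ i, z i ^ k i).re := by
    intro z
    rw [← (Complex.hasSum_re (hf z)).tsum_eq]
    simp only [Complex.re_ofReal_mul]
  have him : ∀ z, (f z).im = ∑' k : Fin m → ℕ, c k * (∏ i, z i ^ k i).im := by
    intro z
    rw [← (Complex.hasSum_im (hf z)).tsum_eq]
    simp only [Complex.im_ofReal_mul]
  have hfcj : ∀ z, f (cj z) = (starRingEnd ℂ) (f z) := by
    intro z
    have h1 := (Complex.hasSum_conj'.mpr (hf z))
    refine (hf (cj z)).unique ?_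
    convert h1 using 2 with k
    simp [cj]
  have hf0 : f 0 = c 0 := by
    simp only [f]
    rw [tsum_eq_single 0]
    · simp
    · intro k hk
      obtain ⟨i, hi⟩ : ∃ i, k i ≠ 0 := by
        by_contra! h
        exact hk (funext h)
      rw [Finset.prod_eq_zero (Finset.mem_univ i) (by simp [hi]), mul_zero]
  -- behaviour at representatives
  have hrep : ∀ α ∈ R, IsAlgebraic ℚ (f α) ↔ α ∈ S := by
    intro α hα
    have h1 := hc3 α hα
    rw [← hre] at h1
    simp only [A] at h1
    have h1' := h1.1
    constructor
    · intro hfa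
      by_contra hS
      rw [if_neg hS] at h1'
      exact h1' (isAlgebraic_re hfa)
    · intro hS
      rw [if_pos hS] at h1'
      refine isAlgebraic_of_parts h1' ?_
      by_cases hcc : cj α = α
      · have h2 := hfcj α
        rw [hcc] at h2
        have h3 : (f α).im = 0 := Complex.conj_eq_iff_im.mp h2.symm
        exact ⟨0, by simp [h3]⟩
      · have h2 := hc4 α hα hcc
        rw [← him] at h2
        exact h2
  have hall : ∀ α : Fin m → ℂ, (∀ i, IsAlgebraic ℚ (α i)) → (IsAlgebraic ℚ (f α) ↔ α ∈ S) := by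
    intro α hα
    by_cases h0 : α = 0
    · subst h0
      refine iff_of_true ?_ hS0
      rw [hf0]
      obtain ⟨q, hq⟩ := hcq 0
      exact isAlgebraic_of_parts ⟨q, by simp [hq]⟩ ⟨0, by simp⟩
    · rcases le_total (enc α) (enc (cj α)) with h | h
      · exact hrep α ⟨hα, h0, h⟩
      · have h1 := hrep (cj α) ⟨halgcj α hα, fun h2 => h0 (by
          rw [← cj_cj α, h2]; funext i; simp [cj]), by rwa [cj_cj]⟩
        rw [hfcj] at h1
        constructor
        · intro h2
          have h3 := hSconj _ (h1.mp (isAlgebraic_conj h2))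
          have h4 : cj (cj α) ∈ S := h3
          rwa [cj_cj] at h4
        · intro h2
          have h3 := isAlgebraic_conj (h1.mpr (hSconj _ h2))
          simpa using h3
  have hmem := hg (show f ∈ _ from ?_)
  · obtain ⟨n, hn⟩ := hmem
    let α : Fin m → ℂ := fun _ => ((n + 1 : ℕ) : ℂ)
    have hαcj : cj α = α := by
      funext i; simp [cj, α]
    have hαR : α ∈ R := by
      refine ⟨fun i => isAlgebraic_natCast _, ?_, by rw [hαcj]⟩
      intro h
      have := congrFun h ⟨0, hm⟩
      simp only [α, Pi.zero_apply, Nat.cast_eq_zero] at this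
      omega
    have h1 := hc3 α hαR
    rw [← hre] at h1
    have h2 := h1.2
    have h3 : ⌊(α ⟨0, hm⟩).re⌋₊ - 1 = n := by
      simp only [α, Complex.natCast_re, Nat.floor_natCast]
      omega
    rw [h3, hn] at h2
    exact h2 rfl
  · refine ⟨?_, transcendental_of_pos hm c hcpos f hf, ⟨fun k => (c k : ℂ), ?_, hf⟩, ?_⟩
    · refine analytic_of_bound (fun k => (c k : ℂ)) ?_ f hf
      intro r hr
      refine (hsr (fun _ => r) fun _ => hr).congr fun k => ?_
      rw [Complex.norm_real, Real.norm_eq_abs, abs_of_pos (hcpos k)]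
    · intro k
      obtain ⟨q, hq⟩ := hcq k
      exact ⟨q, by simp [← hq]⟩
    · ext α
      constructor
      · rintro ⟨h1, h2⟩
        exact (hall α h1).mp h2
      · intro h
        exact ⟨hSalg α h, (hall α (hSalg α h)).mpr h⟩
end

section
/- Let m be a positive integer, let X be a countable subset of ℂ^m, and let K be a dense subset of ℂ. For each u ∈ X fix a dense subset E_u ⊆ ℂ, and suppose that if (0,…,0) ∈ X then E_{(0,…,0)} ∩ K ≠ ∅. Then the set of transcendental entire functions f ∈ K[[z₁,…,z_m]] such that f(u) ∈ E_u for all u ∈ X is uncountable. -/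
open scoped BigOperators

section Helpers
open Finset
lemma aux_mono {m : ℕ} (k : Fin m → ℕ) (n : ℕ) :
    ∃ M : ContinuousMultilinearMap ℂ (fun _ : Fin n => (Fin m → ℂ)) ℂ,
      ∑ i, k i = n → (‖M‖ ≤ 1 ∧ ∀ z, M (fun _ => z) = ∏ i, z i ^ k i) := by
  classical
  by_cases h : ∑ i, k i = n
  swap
  · exact ⟨0, fun h' => (h h').elim⟩
  subst h
  obtain ⟨l, hl⟩ : ∃ l : List (Fin m), ∀ i, l.count i = k i := by
    refine ⟨(Finsupp.toMultiset (Finsupp.equivFunOnFinite.symm k)).toList, fun i => ?_⟩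
    rw [← Multiset.coe_count, Multiset.coe_toList, Finsupp.count_toMultiset]; rfl
  have hlen : l.length = ∑ i, k i := by
    simp_rw [← hl]
    have := (Multiset.sum_count_eq_card (s := Finset.univ) (m := (l : Multiset (Fin m))) (by simp))
    simpa using this.symm
  rw [← hlen]
  let π : ∀ i : Fin l.length, (Fin m → ℂ) →L[ℂ] ℂ := fun i =>
    ContinuousLinearMap.proj (R := ℂ) (φ := fun _ : Fin m => ℂ) (l.get i)
  refine ⟨(ContinuousMultilinearMap.mkPiAlgebra ℂ (Fin l.length) ℂ).compContinuousLinearMap π,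
     fun _ => ⟨?_, ?_⟩⟩
  · refine ContinuousMultilinearMap.opNorm_le_bound zero_le_one fun v => ?_
    simp only [ContinuousMultilinearMap.compContinuousLinearMap_apply,
      ContinuousMultilinearMap.mkPiAlgebra_apply, one_mul, norm_prod]
    refine Finset.prod_le_prod (fun _ _ => norm_nonneg _) fun i _ => ?_
    exact norm_le_pi_norm (v i) _
  · intro z
    simp only [ContinuousMultilinearMap.compContinuousLinearMap_apply,
      ContinuousMultilinearMap.mkPiAlgebra_apply]
    have h1 : ∏ i : Fin l.length, (π i) z = (l.map z).prod := by
      rw [← List.prod_ofFn]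
      congr 1
      apply List.ext_get <;> simp [π]
    rw [h1, Finset.prod_list_map_count]
    simp_rw [hl]
    apply Finset.prod_subset (by simp)
    intro i _ hi
    have : k i = 0 := by rw [← hl]; exact List.count_eq_zero_of_not_mem (by simpa using hi)
    simp [this]

lemma aux_series {m : ℕ} (c : (Fin m → ℕ) → ℂ)
    (hc : ∀ R : ℝ, 0 ≤ R → Summable (fun k => ‖c k‖ * R ^ (∑ i, k i)))
    (f : (Fin m → ℂ) → ℂ)
    (hf : ∀ z, HasSum (fun k : Fin m → ℕ => c k * ∏ i, z i ^ k i) (f z)) :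
    ∃ p : FormalMultilinearSeries ℂ (Fin m → ℂ) ℂ, HasFPowerSeriesOnBall f p 0 ⊤ ∧
      ∀ n z, p n (fun _ => z) = ∑ k ∈ piAntidiag univ n, c k * ∏ i, z i ^ k i := by
  choose M hM using fun (k : Fin m → ℕ) (n : ℕ) => aux_mono k n
  let p : FormalMultilinearSeries ℂ (Fin m → ℂ) ℂ := fun n =>
    ∑ k ∈ piAntidiag univ n, c k • M k n
  have hp : ∀ n z, p n (fun _ => z) = ∑ k ∈ piAntidiag univ n, c k * ∏ i, z i ^ k i := by
    intro n z
    simp only [p, _root_.sum_apply, _root_.smul_apply, smul_eq_mul]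
    refine Finset.sum_congr rfl fun k hk => ?_
    rw [(hM k n (by simpa using hk)).2]
  refine ⟨p, ⟨?_, by simp, ?_⟩, hp⟩
  · refine ENNReal.le_of_forall_nnreal_lt fun r _ => ?_
    refine p.le_radius_of_bound (∑' k, ‖c k‖ * (r : ℝ) ^ (∑ i, k i)) fun n => ?_
    calc ‖p n‖ * (r:ℝ) ^ n ≤ (∑ k ∈ piAntidiag univ n, ‖c k‖) * (r:ℝ) ^ n := by
          gcongr
          refine norm_sum_le_of_le _ fun k hk => ?_
          rw [norm_smul]
          exact mul_le_of_le_one_right (norm_nonneg _) (hM k n (by simpa using hk)).1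
      _ = ∑ k ∈ piAntidiag univ n, ‖c k‖ * (r:ℝ) ^ (∑ i, k i) := by
          rw [Finset.sum_mul]
          refine Finset.sum_congr rfl fun k hk => ?_
          have : ∑ i, k i = n := by simpa using hk
          rw [this]
      _ ≤ _ := (hc r r.2).sum_le_tsum _ (fun _ _ => by positivity)
  · intro y _
    rw [zero_add]
    have h1 := (Equiv.sigmaFiberEquiv (fun k : Fin m → ℕ => ∑ i, k i)).hasSum_iff.mpr (hf y)
    refine h1.sigma fun n => ?_
    rw [hp]
    have h2 : HasSum ((fun k : Fin m → ℕ => c k * ∏ i, y i ^ k i) ∘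
      ((↑) : (↑(piAntidiag (univ : Finset (Fin m)) n) : Set (Fin m → ℕ)) → (Fin m → ℕ)))
      (∑ k ∈ piAntidiag univ n, c k * ∏ i, y i ^ k i) := Finset.hasSum _ _
    have e : (↑(piAntidiag (univ : Finset (Fin m)) n) : Set (Fin m → ℕ)) = {k | ∑ i, k i = n} := by
      ext; simp
    rw [e] at h2
    exact h2

lemma aux_poly_upper (p : Polynomial ℂ) (N : ℕ) (hN : p.natDegree ≤ N) :
    ∃ M : ℝ, 0 ≤ M ∧ ∀ t : ℂ, 1 ≤ ‖t‖ → ‖p.eval t‖ ≤ M * ‖t‖ ^ N := by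
  refine ⟨∑ i ∈ range (p.natDegree + 1), ‖p.coeff i‖, by positivity, fun t ht => ?_⟩
  rw [Polynomial.eval_eq_sum_range, Finset.sum_mul]
  refine norm_sum_le_of_le _ fun i hi => ?_
  rw [norm_mul, norm_pow]
  have : i ≤ N := by
    have := Finset.mem_range.1 hi
    omega
  gcongr

lemma aux_poly_lower (p : Polynomial ℂ) (hp : p ≠ 0) :
    ∃ δ R : ℝ, 0 < δ ∧ ∀ t : ℂ, R ≤ ‖t‖ → δ ≤ ‖p.eval t‖ := by
  by_cases hd : 0 < p.degree
  · have h := Polynomial.tendsto_norm_atTop p hd (l := Filter.comap (norm : ℂ → ℝ) Filter.atTop)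
      (z := fun t => t) Filter.tendsto_comap
    have h1 := h.eventually (Filter.eventually_ge_atTop 1)
    rw [Filter.eventually_comap] at h1
    obtain ⟨R, hR⟩ := Filter.eventually_atTop.1 h1
    exact ⟨1, R, one_pos, fun t ht => hR _ ht t rfl⟩
  · have h := Polynomial.eq_C_of_degree_le_zero (not_lt.1 hd)
    refine ⟨‖p.coeff 0‖, 0, ?_, fun t _ => ?_⟩
    · rw [norm_pos_iff]; intro h0; rw [h0] at h; simp at h; exact hp h
    · conv_rhs => rw [h]
      simp

lemma aux_growth (Q : Polynomial (Polynomial ℂ)) (hQ : Q ≠ 0) (N : ℕ)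
    (hN : ∀ j, (Q.coeff j).natDegree ≤ N) (g : ℂ → ℂ)
    (hg : ∀ t, (Q.map (Polynomial.evalRingHom t)).eval (g t) = 0) :
    ∃ C R : ℝ, ∀ t : ℂ, R ≤ ‖t‖ → ‖g t‖ ≤ C * ‖t‖ ^ N := by
  obtain ⟨δ, R, hδ, hR⟩ := aux_poly_lower Q.leadingCoeff (by simpa using hQ)
  choose M hM0 hM using fun j => aux_poly_upper (Q.coeff j) N (hN j)
  refine ⟨(∑ j ∈ range Q.natDegree, M j) / δ + 1, max R 1, fun t ht => ?_⟩
  have ht1 : 1 ≤ ‖t‖ := (le_max_right _ _).trans ht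
  have hl := hR t ((le_max_left _ _).trans ht)
  set q := Q.map (Polynomial.evalRingHom t) with hq
  have hlc : (Polynomial.evalRingHom t) Q.leadingCoeff ≠ 0 := by
    rw [← norm_pos_iff]; exact hδ.trans_le hl
  have hdeg : q.natDegree = Q.natDegree := Polynomial.natDegree_map_of_leadingCoeff_ne_zero _ hlc
  have hlead : q.leadingCoeff = (Polynomial.evalRingHom t) Q.leadingCoeff :=
    Polynomial.leadingCoeff_map_of_leadingCoeff_ne_zero _ hlc
  have hq0 : q ≠ 0 := by
    rw [← Polynomial.leadingCoeff_ne_zero, hlead]; exact hlc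
  have h1 : ‖g t‖ ≤ q.cauchyBound := NNReal.coe_le_coe.2 (Polynomial.IsRoot.norm_lt_cauchyBound hq0 (hg t)).le
  refine h1.trans ?_
  have h2 : ((sup (range q.natDegree) (‖q.coeff ·‖₊) : NNReal) : ℝ) ≤
      (∑ j ∈ range Q.natDegree, M j) * ‖t‖ ^ N := by
    have h0 : 0 ≤ (∑ j ∈ range Q.natDegree, M j) * ‖t‖ ^ N :=
      mul_nonneg (Finset.sum_nonneg fun j _ => hM0 j) (by positivity)
    rw [← Real.le_toNNReal_iff_coe_le h0]
    refine Finset.sup_le fun j hj => ?_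
    rw [Real.le_toNNReal_iff_coe_le h0]
    rw [hdeg] at hj
    calc ‖q.coeff j‖ = ‖(Q.coeff j).eval t‖ := by simp [hq, Polynomial.coeff_map]
      _ ≤ M j * ‖t‖ ^ N := hM j t ht1
      _ ≤ _ := by
        gcongr
        exact Finset.single_le_sum (f := M) (fun j _ => hM0 j) hj
  rw [Polynomial.cauchyBound, hlead]
  push_cast
  have h3 : (1:ℝ) ≤ ‖t‖ ^ N := one_le_pow₀ ht1
  have h4 : ‖(Polynomial.evalRingHom t) Q.leadingCoeff‖ = ‖Q.leadingCoeff.eval t‖ := rfl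
  rw [h4, add_mul, one_mul, div_mul_eq_mul_div]
  gcongr
  exact (NNReal.coe_nonneg _).trans h2

lemma aux_cauchy (g : ℂ → ℂ) (hg : Differentiable ℂ g) (C R : ℝ) (N n : ℕ) (hn : N < n)
    (h : ∀ t : ℂ, R ≤ ‖t‖ → ‖g t‖ ≤ C * ‖t‖ ^ N) : iteratedDeriv n g 0 = 0 := by
  rw [← norm_le_zero_iff]
  have hlim : Filter.Tendsto (fun r : ℝ => n.factorial * C * (r ^ (n - N))⁻¹) Filter.atTop (nhds 0) := by
    rw [← mul_zero ((n.factorial : ℝ) * C)]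
    refine Filter.Tendsto.const_mul _ (Filter.Tendsto.inv_tendsto_atTop ?_)
    exact Filter.tendsto_pow_atTop (by omega)
  refine ge_of_tendsto hlim ?_
  filter_upwards [Filter.eventually_ge_atTop R, Filter.eventually_gt_atTop 0] with r hr hr0
  have := Complex.norm_iteratedDeriv_le_of_forall_mem_sphere_norm_le (c := 0) (R := r)
    (C := C * r ^ N) n hr0 hg.diffContOnCl (fun z hz => by
      have hz' : ‖z‖ = r := by simpa using hz
      have := h z (by rw [hz']; exact hr)
      rwa [hz'] at this)
  refine this.trans_eq ?_
  have : r ^ n = r ^ N * r ^ (n - N) := by rw [← pow_add]; congr 1; omega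
  rw [this]
  field_simp

lemma aux_transc {m : ℕ} (hm : 0 < m) (c : (Fin m → ℕ) → ℂ) (hc0 : ∀ k, k ≠ 0 → c k ≠ 0)
    (f : (Fin m → ℂ) → ℂ) (p : FormalMultilinearSeries ℂ (Fin m → ℂ) ℂ)
    (hp : HasFPowerSeriesOnBall f p 0 ⊤)
    (hpc : ∀ n z, p n (fun _ => z) = ∑ k ∈ piAntidiag univ n, c k * ∏ i, z i ^ k i) :
    ¬ (∃ P : MvPolynomial (Fin (m + 1)) ℂ, P ≠ 0 ∧
            ∀ z : Fin m → ℂ, MvPolynomial.eval (Fin.snoc z (f z)) P = 0) := by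
  rintro ⟨P, hP0, hP⟩
  set P' := MvPolynomial.rename (finRotate (m + 1)) P with hP'
  have hP'0 : P' ≠ 0 := fun h => hP0 (MvPolynomial.rename_injective _ (finRotate (m+1)).injective
    (by rw [map_zero]; exact h))
  set q := MvPolynomial.finSuccEquiv ℂ m P' with hq
  have hq0 : q ≠ 0 := by simpa [hq] using hP'0
  have hqe : ∀ z, (q.map (MvPolynomial.eval z)).eval (f z) = 0 := by
    intro z
    rw [hq, ← MvPolynomial.eval_eq_eval_mv_eval', hP', MvPolynomial.eval_rename, ← hP z,
      Fin.snoc_eq_cons_rotate]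
    rfl
  obtain ⟨N, hN⟩ : ∃ N, ∀ j, (q.coeff j).totalDegree ≤ N := by
    refine ⟨(range (q.natDegree + 1)).sup fun j => (q.coeff j).totalDegree, fun j => ?_⟩
    by_cases hj : j ≤ q.natDegree
    · exact Finset.le_sup (f := fun j => (q.coeff j).totalDegree) (by simp; omega)
    · rw [Polynomial.coeff_eq_zero_of_natDegree_lt (by omega)]; simp
  set n := N + 1 with hn
  let B : MvPolynomial (Fin m) ℂ := ∑ k ∈ piAntidiag univ n,
    MvPolynomial.monomial (Finsupp.equivFunOnFinite.symm k) (c k)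
  have hB : ∀ a, MvPolynomial.eval a B = ∑ k ∈ piAntidiag univ n, c k * ∏ i, a i ^ k i := by
    intro a
    simp only [B, map_sum, MvPolynomial.eval_monomial]
    refine Finset.sum_congr rfl fun k _ => ?_
    rw [Finsupp.prod_fintype _ _ (by simp)]
    rfl
  have hB0 : B ≠ 0 := by
    let k : Fin m → ℕ := Pi.single ⟨0, hm⟩ n
    have hk : k ∈ piAntidiag (univ : Finset (Fin m)) n := by simp [k]
    have hk0 : k ≠ 0 := by simp [k, hn]
    intro h
    have : MvPolynomial.coeff (Finsupp.equivFunOnFinite.symm k) B = c k := by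
      simp only [B, MvPolynomial.coeff_sum, MvPolynomial.coeff_monomial,
        EmbeddingLike.apply_eq_iff_eq]
      rw [Finset.sum_ite_eq' , if_pos hk]
    rw [h] at this
    exact hc0 k hk0 (by simpa using this.symm)
  obtain ⟨a, ha⟩ : ∃ a, MvPolynomial.eval a (q.leadingCoeff * B) ≠ 0 := by
    by_contra! h
    exact mul_ne_zero (Polynomial.leadingCoeff_ne_zero.2 hq0) hB0
      (MvPolynomial.funext fun x => by rw [h x, map_zero])
  rw [map_mul] at ha
  have ha1 := left_ne_zero_of_mul ha
  have ha2 := right_ne_zero_of_mul ha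
  let φ : MvPolynomial (Fin m) ℂ →ₐ[ℂ] Polynomial ℂ :=
    MvPolynomial.aeval fun i => Polynomial.C (a i) * Polynomial.X
  have hcomp : ∀ t : ℂ,
      ((Polynomial.evalRingHom t).comp φ.toRingHom) = MvPolynomial.eval (t • a) := by
    intro t
    apply MvPolynomial.ringHom_ext
    · intro x
      change Polynomial.eval t (MvPolynomial.aeval _ (MvPolynomial.C x)) = _
      rw [MvPolynomial.aeval_C, MvPolynomial.eval_C]
      simp
    · intro i
      change Polynomial.eval t (MvPolynomial.aeval _ (MvPolynomial.X i)) = _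
      rw [MvPolynomial.aeval_X, MvPolynomial.eval_X]
      rw [Polynomial.eval_mul, Polynomial.eval_C, Polynomial.eval_X, Pi.smul_apply, smul_eq_mul,
        mul_comm]
  have hφ : ∀ (r : MvPolynomial (Fin m) ℂ) (t : ℂ), (φ r).eval t = MvPolynomial.eval (t • a) r :=
    fun r t => congrArg (fun ψ => ψ r) (hcomp t)
  have hφd : ∀ r : MvPolynomial (Fin m) ℂ, (φ r).natDegree ≤ r.totalDegree := by
    intro r
    refine MvPolynomial.aeval_natDegree_le r le_rfl _ (n := 1) (fun i => ?_) |>.trans (by simp)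
    exact (Polynomial.natDegree_C_mul_le _ _).trans Polynomial.natDegree_X_le
  let g : ℂ → ℂ := fun t => f (t • a)
  obtain ⟨C, R, hCR⟩ := aux_growth (q.map φ.toRingHom) (by
      intro h
      have h1 := congrArg (fun s => (s.coeff q.natDegree).eval 1) h
      simp only [Polynomial.coeff_map] at h1
      apply ha1
      have h2 := hφ q.leadingCoeff 1
      rw [one_smul] at h2
      rw [← h2]
      simpa using h1) N (fun j => by
      rw [Polynomial.coeff_map]
      exact (hφd _).trans (hN j)) g (fun t => by
      rw [Polynomial.map_map]
      rw [hcomp]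
      exact hqe _)
  let u : ℂ →L[ℂ] (Fin m → ℂ) := (ContinuousLinearMap.id ℂ ℂ).smulRight a
  have hu : ∀ t, u t = t • a := fun t => rfl
  have hgu : g = f ∘ u := rfl
  have hp' : HasFPowerSeriesOnBall f p (u 0) ⊤ := by rw [map_zero]; exact hp
  have hgs := hp'.compContinuousLinearMap
  rw [← hgu] at hgs
  have hfd : Differentiable ℂ f := by
    have := hp.differentiableOn
    rw [← differentiableOn_univ]
    simpa [Metric.eball_top] using this
  have hgd : Differentiable ℂ g := by rw [hgu]; exact hfd.comp u.differentiable
  have h1 := aux_cauchy g hgd C R N n (by omega) hCR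
  have h2 := hgs.factorial_smul (1 : ℂ) n
  rw [iteratedDeriv_eq_iteratedFDeriv] at h1
  rw [h1, FormalMultilinearSeries.compContinuousLinearMap_apply] at h2
  have h3 : (u ∘ fun _ : Fin n => (1:ℂ)) = fun _ => a := by ext; simp [hu]
  rw [h3, hpc, ← hB] at h2
  simp [Nat.factorial_ne_zero] at h2
  exact ha2 h2

/-- multi-indices of degree `< d` -/
noncomputable def lowDeg (m d : ℕ) : Finset (Fin m → ℕ) :=
  ((Set.finite_Iic (fun _ : Fin m => d)).subset
    (t := {k : Fin m → ℕ | ∑ i, k i < d}) (fun k hk i =>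
      (Finset.single_le_sum (f := k) (fun _ _ => Nat.zero_le _) (Finset.mem_univ i)).trans
        (le_of_lt hk))).toFinset

lemma mem_lowDeg {m d : ℕ} (k : Fin m → ℕ) : k ∈ lowDeg m d ↔ ∑ i, k i < d := by
  simp [lowDeg]

lemma aux_interp_one {m : ℕ} (u : ℕ → Fin m → ℂ) (hu : Function.Injective u)
    (hu0 : ∀ n, u n ≠ 0) (n d j : ℕ) :
    ∃ L : MvPolynomial (Fin m) ℂ, (∀ k, L.coeff k ≠ 0 → d ≤ ∑ i, k i) ∧
      ∀ i ≤ n, MvPolynomial.eval (u i) L = if i = j then 1 else 0 := by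
  classical
  have h1 : ∀ i, i ≠ j → ∃ s, u j s ≠ u i s := fun i hi => by
    by_contra! h
    exact hi (hu (funext h)).symm
  obtain ⟨s0, hs0⟩ : ∃ s, u j s ≠ 0 := by
    by_contra! h
    exact hu0 j (funext h)
  have : Nonempty (Fin m) := ⟨s0⟩
  choose! s hs using h1
  let G : MvPolynomial (Fin m) ℂ := ∏ i ∈ (range (n+1)).erase j,
    (MvPolynomial.C (u j (s i) - u i (s i))⁻¹ * (MvPolynomial.X (s i) - MvPolynomial.C (u i (s i))))
  refine ⟨G * MvPolynomial.monomial (Finsupp.single s0 d) ((u j s0 ^ d)⁻¹), ?_, ?_⟩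
  · intro k hk
    rw [MvPolynomial.coeff_mul_monomial'] at hk
    split_ifs at hk with h
    · have h2 : d ≤ k s0 := by simpa using h s0
      exact h2.trans (Finset.single_le_sum (f := k) (fun _ _ => Nat.zero_le _) (Finset.mem_univ s0))
    · exact (hk rfl).elim
  · intro i hi
    rw [map_mul, MvPolynomial.eval_monomial]
    simp only [G, map_prod, map_mul, map_sub, MvPolynomial.eval_C, MvPolynomial.eval_X]
    split_ifs with hij
    · subst hij
      rw [Finset.prod_eq_one]
      · simp [hs0]
      · intro l hl
        exact inv_mul_cancel₀ (sub_ne_zero.2 (hs l (Finset.ne_of_mem_erase hl)))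
    · rw [Finset.prod_eq_zero (i := i), zero_mul]
      · simp [hij]; omega
      · simp

lemma aux_interp {m : ℕ} (u : ℕ → Fin m → ℂ) (hu : Function.Injective u)
    (hu0 : ∀ n, u n ≠ 0) (n d : ℕ) :
    ∃ D, d < D ∧ ∃ L : ℕ → (Fin m → ℕ) → ℂ, ∀ i ≤ n, ∀ j ≤ n,
      ∑ k ∈ lowDeg m D \ lowDeg m d, L j k * ∏ s, u i s ^ k s = if i = j then 1 else 0 := by
  classical
  choose L hL hL2 using aux_interp_one u hu hu0 n d
  refine ⟨d + 1 + (range (n+1)).sup (fun j => (L j).totalDegree), by omega,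
    fun j k => (L j).coeff (Finsupp.equivFunOnFinite.symm k), fun i hi j hj => ?_⟩
  rw [← hL2 j i hi, MvPolynomial.eval_eq']
  symm
  have hmap := Finset.sum_map (L j).support Finsupp.equivFunOnFinite.toEmbedding
    (fun k : Fin m → ℕ => (L j).coeff (Finsupp.equivFunOnFinite.symm k) * ∏ s, u i s ^ k s)
  simp only [Equiv.coe_toEmbedding, Equiv.symm_apply_apply,
    Finsupp.equivFunOnFinite_apply] at hmap
  rw [← hmap]
  apply Finset.sum_subset
  · intro k hk
    simp only [Finset.mem_map, Equiv.coe_toEmbedding] at hk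
    obtain ⟨k', hk', rfl⟩ := hk
    rw [Finset.mem_sdiff, mem_lowDeg, mem_lowDeg]
    have h1 := hL j k' (by simpa using hk')
    have h2 : ∑ s, k' s ≤ (L j).totalDegree := by
      have := MvPolynomial.le_totalDegree hk'
      rwa [Finsupp.sum_fintype _ _ (by simp)] at this
    have h3 : (L j).totalDegree ≤ (range (n+1)).sup (fun j => (L j).totalDegree) :=
      Finset.le_sup (f := fun j => (L j).totalDegree) (by simp; omega)
    simp only [Finsupp.equivFunOnFinite_apply]
    omega
  · intro k _ hk
    have : (L j).coeff (Finsupp.equivFunOnFinite.symm k) = 0 := by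
      by_contra h
      exact hk (Finset.mem_map.2 ⟨_, MvPolynomial.mem_support_iff.2 h, by simp⟩)
    simp [this]

lemma aux_step {ι : Type*} (B : Finset ι) (v L : ℕ → ι → ℂ) (n : ℕ)
    (hL : ∀ i ≤ n, ∀ j ≤ n, ∑ k ∈ B, L j k * v i k = if i = j then 1 else 0)
    (A : ι → ℝ) (hA : ∀ k, 0 < A k) (K : Set ℂ) (hK : Dense K) :
    ∃ ε : ℝ, 0 < ε ∧ ∀ η > 0, ∀ r : ℕ → ℂ, (∀ j ≤ n, ‖r j‖ < ε) →
      ∃ b : ι → ℂ, (∀ k, b k ∈ K) ∧ (∀ k ∈ B, ‖b k‖ < A k) ∧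
        ∀ j ≤ n, ‖r j - ∑ k ∈ B, b k * v j k‖ < η := by
  classical
  have h1 : ∀ᶠ ε in nhdsWithin (0:ℝ) (Set.Ioi 0), ∀ k ∈ B,
      ε * (∑ j ∈ range (n+1), ‖L j k‖) < A k := by
    rw [Filter.eventually_all_finset]
    intro k _
    have : Filter.Tendsto (fun ε : ℝ => ε * (∑ j ∈ range (n+1), ‖L j k‖)) (nhds 0) (nhds 0) := by
      have : Continuous (fun ε : ℝ => ε * (∑ j ∈ range (n+1), ‖L j k‖)) := by fun_prop
      simpa using this.tendsto 0
    exact (this.mono_left nhdsWithin_le_nhds).eventually (gt_mem_nhds (hA k))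
  obtain ⟨ε, hε, hε0⟩ := (h1.and self_mem_nhdsWithin).exists
  refine ⟨ε, hε0, fun η hη r hr => ?_⟩
  let Q : ι → ℂ := fun k => ∑ j ∈ range (n+1), r j * L j k
  let U : Set (ι → ℂ) := {b | (∀ k ∈ B, ‖b k‖ < A k) ∧ ∀ j ∈ range (n+1),
    ‖r j - ∑ k ∈ B, b k * v j k‖ < η}
  have hU : IsOpen U := by
    have e : U = (⋂ k ∈ B, {b | ‖b k‖ < A k}) ∩
        ⋂ j ∈ range (n+1), {b | ‖r j - ∑ k ∈ B, b k * v j k‖ < η} := by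
      ext b; simp [U]
    rw [e]
    refine IsOpen.inter (isOpen_biInter_finset fun k _ => ?_) (isOpen_biInter_finset fun j _ => ?_)
    · exact isOpen_lt (by fun_prop) continuous_const
    · exact isOpen_lt (by fun_prop) continuous_const
  have hQ : Q ∈ U := by
    refine ⟨fun k hk => lt_of_le_of_lt ?_ (hε k hk), fun i hi => ?_⟩
    · rw [Finset.mul_sum]
      refine norm_sum_le_of_le _ fun j hj => ?_
      rw [norm_mul]
      gcongr
      exact (hr j (by simp at hj; omega)).le
    · have hi' : i ≤ n := by simp at hi; omega
      have : ∑ k ∈ B, Q k * v i k = r i := by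
        simp only [Q, Finset.sum_mul]
        rw [Finset.sum_comm]
        have : ∀ j ∈ range (n+1), ∑ k ∈ B, r j * L j k * v i k = if i = j then r j else 0 := by
          intro j hj
          simp_rw [mul_assoc]
          rw [← Finset.mul_sum, hL i hi' j (by simp at hj; omega)]
          simp
        rw [Finset.sum_congr rfl this, Finset.sum_ite_eq, if_pos hi]
      rw [this]
      simpa using hη
  obtain ⟨b, hbU, hbK⟩ := (dense_pi Set.univ (fun (_ : ι) _ => hK)).inter_open_nonempty U hU ⟨Q, hQ⟩
  exact ⟨b, fun k => hbK k trivial, hbU.1, fun j hj => hbU.2 j (by simp; omega)⟩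

lemma aux_construct {m : ℕ} (u : ℕ → Fin m → ℂ) (hu : Function.Injective u)
    (hu0 : ∀ n, u n ≠ 0) (E : ℕ → Set ℂ) (hE : ∀ n, Dense (E n)) (K : Set ℂ) (hK : Dense K)
    (c0 : ℂ) :
    ∃ c : (Fin m → ℕ) → ℂ, c 0 = c0 ∧ (∀ k, k ≠ 0 → c k ∈ K) ∧
      (∀ R : ℝ, 0 ≤ R → Summable (fun k => ‖c k‖ * R ^ (∑ i, k i))) ∧
      ∀ n, ∃ e ∈ E n, HasSum (fun k : Fin m → ℕ => c k * ∏ i, u n i ^ k i) e := by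
  classical
  obtain ⟨a, ha0, C, haC, -⟩ := posSumOfEncodable one_pos (Fin m → ℕ)
  let A : (Fin m → ℕ) → ℝ := fun k => a k / (∑ i, k i).factorial
  have hA : ∀ k, 0 < A k := fun k => div_pos (ha0 k) (by positivity)
  let v : ℕ → (Fin m → ℕ) → ℂ := fun j k => ∏ i, u j i ^ k i
  choose D hD L hL using aux_interp u hu hu0
  let d : ℕ → ℕ := fun n => Nat.rec 1 (fun n x => D n x) n
  have hd0 : d 0 = 1 := rfl
  have hds : ∀ n, d (n+1) = D n (d n) := fun n => rfl
  have hdm : StrictMono d := strictMono_nat_of_lt_succ fun n => by rw [hds]; exact hD _ _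
  let B : ℕ → Finset (Fin m → ℕ) := fun n => lowDeg m (d (n+1)) \ lowDeg m (d n)
  have hB : ∀ n k, k ∈ B n ↔ d n ≤ ∑ i, k i ∧ ∑ i, k i < d (n+1) := by
    intro n k
    simp only [B, Finset.mem_sdiff, mem_lowDeg]
    omega
  choose ε hε0 hε using fun n => aux_step (B n) v (L n (d n)) n (hL n (d n)) A hA K hK
  let ε' : ℕ → ℝ := fun n => min (ε n) (1 / ((n:ℝ) + 1))
  have hε'0 : ∀ n, 0 < ε' n := fun n => lt_min (hε0 n) (by positivity)
  let State : ℕ → Type := fun n =>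
    {st : (ℕ → ℂ) × (ℕ → ℂ) // ∀ j < n, st.2 j ∈ E j ∧ ‖st.2 j - st.1 j‖ < ε' n}
  have step : ∀ n (st : State n), ∃ (st' : State (n+1)) (b : (Fin m → ℕ) → ℂ),
      (∀ k, b k ∈ K) ∧ (∀ k ∈ B n, ‖b k‖ < A k) ∧
      (∀ j, st'.1.1 j = st.1.1 j + ∑ k ∈ B n, b k * v j k) ∧
      ∀ j < n, st'.1.2 j = st.1.2 j := by
    rintro n ⟨⟨s, e⟩, hst⟩
    obtain ⟨x, hxE, hx⟩ := (hE n).exists_dist_lt (s n) (hε'0 n)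
    rw [dist_comm, dist_eq_norm] at hx
    let e' := Function.update e n x
    have he' : ∀ j < n + 1, e' j ∈ E j ∧ ‖e' j - s j‖ < ε' n := by
      intro j hj
      rcases Nat.lt_succ_iff_lt_or_eq.1 hj with h | h
      · have : e' j = e j := Function.update_of_ne h.ne _ _
        rw [this]
        exact hst j h
      · subst h
        have : e' j = x := Function.update_self _ _ _
        rw [this]
        exact ⟨hxE, hx⟩
    obtain ⟨b, hb1, hb2, hb3⟩ := hε n (ε' (n+1)) (hε'0 _) (fun j => e' j - s j)
      (fun j hj => ((he' j (by omega)).2).trans_le (min_le_left _ _))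
    refine ⟨⟨⟨fun j => s j + ∑ k ∈ B n, b k * v j k, e'⟩, fun j hj => ⟨(he' j hj).1, ?_⟩⟩,
      b, hb1, hb2, fun j => rfl, fun j hj => Function.update_of_ne hj.ne _ _⟩
    have := hb3 j (by omega)
    rwa [sub_sub] at this
  choose next b hbK hbA hbs hbe using step
  let seq : ∀ n, State n := fun n =>
    Nat.rec ⟨⟨fun _ => c0, fun _ => 0⟩, fun j hj => (Nat.not_lt_zero j hj).elim⟩
      (fun n st => next n st) n
  have hseq0 : ∀ j, (seq 0).1.1 j = c0 := fun j => rfl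
  have hseqs : ∀ n, seq (n+1) = next n (seq n) := fun n => rfl
  let bb : ℕ → (Fin m → ℕ) → ℂ := fun n => b n (seq n)
  let e : ℕ → ℂ := fun j => (seq (j+1)).1.2 j
  have he : ∀ j n, j < n → (seq n).1.2 j = e j := by
    intro j n hn
    induction n, hn using Nat.le_induction with
    | base => rfl
    | succ n hn ih => rw [hseqs, hbe _ _ _ hn, ih]
  have heE : ∀ j, e j ∈ E j := fun j => ((seq (j+1)).2 j (by omega)).1
  have hlim : ∀ j, Filter.Tendsto (fun n => (seq n).1.1 j) Filter.atTop (nhds (e j)) := by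
    intro j
    rw [tendsto_iff_norm_sub_tendsto_zero]
    refine squeeze_zero' (Filter.Eventually.of_forall fun _ => norm_nonneg _) ?_
      tendsto_one_div_add_atTop_nhds_zero_nat
    filter_upwards [Filter.eventually_gt_atTop j] with n hn
    have := ((seq n).2 j hn).2
    rw [he j n hn, norm_sub_rev] at this
    exact this.le.trans (min_le_right _ _)
  have hblk : ∀ k : Fin m → ℕ, k ≠ 0 → ∃ n, k ∈ B n := by
    intro k hk
    have h1 : ∃ n, ∑ i, k i < d (n+1) := ⟨∑ i, k i, by
      have := hdm.le_apply (x := ∑ i, k i + 1)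
      omega⟩
    refine ⟨Nat.find h1, (hB _ _).2 ⟨?_, Nat.find_spec h1⟩⟩
    rcases Nat.eq_zero_or_pos (Nat.find h1) with h | h
    · rw [h, hd0, Nat.one_le_iff_ne_zero]
      intro h0
      apply hk
      funext i
      simpa using (Finset.sum_eq_zero_iff.1 h0) i (Finset.mem_univ i)
    · have := Nat.find_min h1 (m := Nat.find h1 - 1) (by omega)
      rw [Nat.sub_add_cancel h] at this
      omega
  have huniq : ∀ k n n', k ∈ B n → k ∈ B n' → n = n' := by
    intro k n n' h h'
    rw [hB] at h h'
    by_contra hne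
    rcases Nat.lt_or_gt_of_ne hne with hl | hl
    · have := hdm.monotone (show n + 1 ≤ n' from hl); omega
    · have := hdm.monotone (show n' + 1 ≤ n from hl); omega
  choose! blk hblk using hblk
  let c : (Fin m → ℕ) → ℂ := fun k => if k = 0 then c0 else bb (blk k) k
  have hBne : ∀ n k, k ∈ B n → k ≠ 0 := by
    rintro n k hk rfl
    rw [hB] at hk
    have := hdm.monotone (Nat.zero_le n)
    simp at hk
    omega
  have hcB : ∀ n k, k ∈ B n → c k = bb n k := by
    intro n k hk
    have h0 := hBne n k hk
    simp only [c, if_neg h0]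
    rw [huniq k _ _ (hblk k h0) hk]
  have hsum : ∀ R : ℝ, 0 ≤ R → Summable (fun k => ‖c k‖ * R ^ (∑ i, k i)) := by
    intro R hR
    have h1 : Summable (fun k => ‖Function.update c 0 0 k‖ * R ^ (∑ i, k i)) := by
      refine Summable.of_nonneg_of_le (fun k => by positivity) (fun k => ?_)
        (haC.summable.mul_right (Real.exp R))
      by_cases hk : k = 0
      · subst hk
        simp only [Function.update_self, norm_zero, zero_mul]
        exact mul_nonneg (ha0 _).le (Real.exp_pos _).le
      · rw [Function.update_of_ne hk, hcB _ k (hblk k hk)]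
        have h2 := (hbA _ (seq (blk k)) k (hblk k hk)).le
        calc ‖bb (blk k) k‖ * R ^ (∑ i, k i) ≤ A k * R ^ (∑ i, k i) := by gcongr
          _ = a k * (R ^ (∑ i, k i) / (∑ i, k i).factorial) := by simp only [A]; ring
          _ ≤ a k * Real.exp R := by
            gcongr
            · exact (ha0 k).le
            · exact Real.pow_div_factorial_le_exp R hR _
    refine (summable_congr_cofinite ?_).1 h1
    have : ∀ᶠ k in Filter.cofinite, k ≠ (0 : Fin m → ℕ) := by
      simp [Filter.eventually_cofinite]
    filter_upwards [this] with k hk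
    rw [Function.update_of_ne hk]
  refine ⟨c, by simp [c], fun k hk => ?_, hsum, fun j => ⟨e j, heE j, ?_⟩⟩
  · rw [hcB _ k (hblk k hk)]
    exact hbK _ _ _
  · have hs : Summable (fun k => c k * v j k) := by
      refine Summable.of_norm_bounded (hsum ‖u j‖ (norm_nonneg _)) fun k => ?_
      rw [norm_mul, norm_prod, ← Finset.prod_pow_eq_pow_sum]
      gcongr with i _
      rw [norm_pow]
      gcongr
      exact norm_le_pi_norm (u j) i
    have hpart : ∀ n, ∑ k ∈ lowDeg m (d n), c k * v j k = (seq n).1.1 j := by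
      intro n
      induction n with
      | zero =>
        have : lowDeg m (d 0) = {0} := by
          ext k
          rw [mem_lowDeg, hd0, Nat.lt_one_iff, Finset.mem_singleton, Finset.sum_eq_zero_iff]
          simp [funext_iff]
        rw [this, hseq0]
        simp [c, v]
      | succ n ih =>
        have hsub : lowDeg m (d n) ⊆ lowDeg m (d (n+1)) := by
          intro k
          rw [mem_lowDeg, mem_lowDeg]
          exact fun h => h.trans (hdm (Nat.lt_succ_self n))
        rw [← Finset.sum_sdiff hsub, ih, hseqs, hbs, add_comm]
        congr 1
        exact Finset.sum_congr rfl fun k hk => by rw [hcB n k hk]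
    have hT : Filter.Tendsto (fun n => lowDeg m (d n)) Filter.atTop Filter.atTop := by
      refine Filter.tendsto_atTop_finset_of_monotone (fun n n' hn k => ?_) fun k => ?_
      · rw [mem_lowDeg, mem_lowDeg]
        exact fun h => h.trans_le (hdm.monotone hn)
      · refine ⟨∑ i, k i + 1, ?_⟩
        rw [mem_lowDeg]
        have := hdm.le_apply (x := ∑ i, k i + 1)
        omega
    have h1 := hs.hasSum.comp hT
    have h2 : Filter.Tendsto (fun n => ∑ k ∈ lowDeg m (d n), c k * v j k) Filter.atTop
        (nhds (e j)) := by
      simp_rw [hpart]; exact hlim j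
    have := tendsto_nhds_unique h1 h2
    rw [← this]
    exact hs.hasSum

end Helpers

/-- for a countable `X ⊆ ℂ^m`, a dense `K ⊆ ℂ`, and dense targets
`E_u ⊆ ℂ` for `u ∈ X` (with `E_0 ∩ K ≠ ∅` if `0 ∈ X`), there are uncountably many
transcendental entire functions `f ∈ K[[z₁,…,z_m]]` with `f(u) ∈ E_u` for all `u ∈ X`. -/
theorem uncountably_many_transcendental_entire_functions_several_variables
    (m : ℕ) (hm : 0 < m) (X : Set (Fin m → ℂ)) (hX : X.Countable)
    (K : Set ℂ) (hK : Dense K)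
    (E : (Fin m → ℂ) → Set ℂ) (hE : ∀ u ∈ X, Dense (E u))
    (h0 : (0 : Fin m → ℂ) ∈ X → (E 0 ∩ K).Nonempty) :
    ¬ ({f : (Fin m → ℂ) → ℂ |
        (∀ x, AnalyticAt ℂ f x) ∧
        ¬ (∃ P : MvPolynomial (Fin (m + 1)) ℂ, P ≠ 0 ∧
            ∀ z : Fin m → ℂ, MvPolynomial.eval (Fin.snoc z (f z)) P = 0) ∧
        (∃ c : (Fin m → ℕ) → ℂ, (∀ k, c k ∈ K) ∧
            ∀ z : Fin m → ℂ, HasSum (fun k : Fin m → ℕ => c k * ∏ i, z i ^ k i) (f z)) ∧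
        (∀ u ∈ X, f u ∈ E u)}).Countable := by
  classical
  intro hcount
  set S := {f : (Fin m → ℂ) → ℂ |
        (∀ x, AnalyticAt ℂ f x) ∧
        ¬ (∃ P : MvPolynomial (Fin (m + 1)) ℂ, P ≠ 0 ∧
            ∀ z : Fin m → ℂ, MvPolynomial.eval (Fin.snoc z (f z)) P = 0) ∧
        (∃ c : (Fin m → ℕ) → ℂ, (∀ k, c k ∈ K) ∧
            ∀ z : Fin m → ℂ, HasSum (fun k : Fin m → ℕ => c k * ∏ i, z i ^ k i) (f z)) ∧
        (∀ u ∈ X, f u ∈ E u)} with hS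
  have : Nonempty (Fin m) := ⟨⟨0, hm⟩⟩
  -- a new point
  obtain ⟨w, hwX⟩ : ∃ w, w ∉ X ∪ {0} := by
    by_contra! h
    have h1 : (Set.univ : Set (Fin m → ℂ)).Countable :=
      (hX.union (Set.countable_singleton 0)).mono fun x _ => h x
    have h2 : (Set.univ : Set ℂ).Countable := by
      refine Set.countable_univ_iff.2 ?_
      have := Set.countable_univ_iff.1 h1
      exact (Function.const_injective (α := Fin m) (β := ℂ)).countable
    exact not_countable_complex h2
  have hw0 : w ≠ 0 := fun h => hwX (Or.inr h)
  have hwX' : w ∉ X := fun h => hwX (Or.inl h)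
  let E' : (Fin m → ℂ) → Set ℂ := fun z =>
    if z = w then ((fun f => f w) '' S)ᶜ else if z ∈ X then E z else Set.univ
  have hE' : ∀ z, Dense (E' z) := by
    intro z
    simp only [E']
    split_ifs with h1 h2
    · exact (hcount.image _).dense_compl ℝ
    · exact hE z h2
    · exact dense_univ
  let Y : Set (Fin m → ℂ) := (X ∪ {w} ∪ Set.range (fun n : ℕ => fun _ : Fin m => (n : ℂ))) \ {0}
  have hYc : Y.Countable := ((hX.union (Set.countable_singleton w)).union
    (Set.countable_range _)).mono Set.sdiff_subset
  have hYi : Y.Infinite := by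
    refine Set.Infinite.sdiff ?_ (Set.finite_singleton 0)
    refine Set.Infinite.mono Set.subset_union_right (Set.infinite_range_of_injective ?_)
    intro a b hab
    have := congrFun hab ⟨0, hm⟩
    exact Nat.cast_injective (R := ℂ) this
  have : Countable Y := hYc.to_subtype
  have : Infinite Y := hYi.to_subtype
  obtain ⟨φ⟩ := nonempty_equiv_of_countable (α := ℕ) (β := Y)
  let u : ℕ → Fin m → ℂ := fun n => (φ n : Fin m → ℂ)
  have hu : Function.Injective u := Subtype.val_injective.comp φ.injective
  have hu0 : ∀ n, u n ≠ 0 := fun n h => (φ n).2.2 h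
  have hus : ∀ y ∈ Y, ∃ n, u n = y := fun y hy => ⟨φ.symm ⟨y, hy⟩, by simp [u]⟩
  obtain ⟨c0, hc0K, hc0E⟩ : ∃ c0 ∈ K, (0 : Fin m → ℂ) ∈ X → c0 ∈ E 0 := by
    by_cases h : (0 : Fin m → ℂ) ∈ X
    · obtain ⟨x, hx⟩ := h0 h
      exact ⟨x, hx.2, fun _ => hx.1⟩
    · obtain ⟨x, hx⟩ := hK.nonempty
      exact ⟨x, hx, fun h' => (h h').elim⟩
  obtain ⟨c, hc0, hcK, hcs, hcE⟩ := aux_construct u hu hu0 (fun n => E' (u n)) (fun n => hE' _)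
    (K \ {0}) (hK.sdiff_singleton 0) c0
  have hsum : ∀ z : Fin m → ℂ, Summable (fun k : Fin m → ℕ => c k * ∏ i, z i ^ k i) := by
    intro z
    refine Summable.of_norm_bounded (hcs ‖z‖ (norm_nonneg _)) fun k => ?_
    rw [norm_mul, norm_prod, ← Finset.prod_pow_eq_pow_sum]
    gcongr with i _
    rw [norm_pow]
    gcongr
    exact norm_le_pi_norm z i
  let f : (Fin m → ℂ) → ℂ := fun z => ∑' k : Fin m → ℕ, c k * ∏ i, z i ^ k i
  have hf : ∀ z, HasSum (fun k : Fin m → ℕ => c k * ∏ i, z i ^ k i) (f z) :=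
    fun z => (hsum z).hasSum
  obtain ⟨p, hp, hpc⟩ := aux_series c hcs f hf
  have hfE : ∀ y ∈ Y, f y ∈ E' y := by
    intro y hy
    obtain ⟨n, rfl⟩ := hus y hy
    obtain ⟨e, he, hes⟩ := hcE n
    rwa [(hf _).unique hes]
  have hf0 : f 0 = c0 := by
    refine (hf 0).unique ?_
    rw [← hc0]
    have := hasSum_single (f := fun k : Fin m → ℕ => c k * ∏ i, (0 : Fin m → ℂ) i ^ k i) 0 ?_
    · simpa using this
    · intro k hk
      obtain ⟨i, hi⟩ := Function.ne_iff.1 hk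
      rw [Finset.prod_eq_zero (Finset.mem_univ i), mul_zero]
      simpa using hi
  have hfS : f ∈ S := by
    refine ⟨fun x => hp.analyticAt_of_mem (by simp), aux_transc hm c (fun k hk => (hcK k hk).2)
      f p hp hpc, ⟨c, fun k => ?_, hf⟩, fun y hy => ?_⟩
    · by_cases hk : k = 0
      · rw [hk, hc0]; exact hc0K
      · exact (hcK k hk).1
    · by_cases hy0 : y = 0
      · subst hy0
        rw [hf0]; exact hc0E hy
      · have h1 := hfE y ⟨Or.inl (Or.inl hy), hy0⟩
        have h2 : y ≠ w := fun h => hwX' (h ▸ hy)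
        simpa only [E', if_neg h2, if_pos hy] using h1
  have h1 := hfE w ⟨Or.inl (Or.inr rfl), hw0⟩
  simp only [E', if_true] at h1
  exact h1 ⟨f, hfS, rfl⟩
end

section
/- Let A be a countable subset of ℂ and let K be a dense subset of ℂ. For each α ∈ A fix a dense subset E_α ⊆ ℂ, and suppose that if 0 ∈ A then E_0 ∩ K ≠ ∅. Then the set of transcendental entire functions f ∈ K[[z]] such that f(α) ∈ E_α for all α ∈ A is uncountable. -/
open scoped BigOperators
open Polynomial in
lemma aux_poly_bound (p : ℂ[X]) (z : ℂ) (hz : 1 ≤ ‖z‖) (N : ℕ) (hN : p.natDegree ≤ N) :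
    ‖p.eval z‖ ≤ (∑ i ∈ Finset.range (p.natDegree + 1), ‖p.coeff i‖) * ‖z‖ ^ N := by
  rw [eval_eq_sum_range, Finset.sum_mul]
  refine (norm_sum_le _ _).trans (Finset.sum_le_sum fun i hi => ?_)
  rw [norm_mul, norm_pow]
  have : i ≤ N := by simp at hi; omega
  gcongr

open Polynomial in
lemma aux_poly_lower_s2 (p : ℂ[X]) (hp : p ≠ 0) :
    ∃ m > 0, ∃ R : ℝ, ∀ z : ℂ, R ≤ ‖z‖ → m ≤ ‖p.eval z‖ := by
  by_cases h : 0 < p.degree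
  · have := p.tendsto_norm_atTop h (tendsto_norm_cobounded_atTop (E := ℂ))
    have h2 := this.eventually_ge_atTop 1
    rw [← comap_norm_atTop, Filter.eventually_comap] at h2
    obtain ⟨R, hR⟩ := Filter.eventually_atTop.1 h2
    exact ⟨1, one_pos, R, fun z hz => hR _ hz z rfl⟩
  · have h1 : p = C (p.coeff 0) := eq_C_of_degree_le_zero (not_lt.1 h)
    refine ⟨‖p.coeff 0‖, ?_, 0, fun z _ => ?_⟩
    · rw [gt_iff_lt, norm_pos_iff]
      intro h0
      rw [h0] at h1
      exact hp (by simpa using h1)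
    · conv_rhs => rw [h1]
      simp

open Polynomial in
set_option maxHeartbeats 2000000 in
lemma aux_growth_s2 (Q : ℂ[X][X]) (hQ : Q ≠ 0) (f : ℂ → ℂ)
    (h : ∀ z, (Q.map (evalRingHom z)).eval (f z) = 0) :
    ∃ (C : ℝ) (N : ℕ) (R : ℝ), ∀ z, R ≤ ‖z‖ → ‖f z‖ ≤ C * ‖z‖ ^ N := by
  obtain ⟨m, hm, R, hR⟩ := aux_poly_lower_s2 Q.leadingCoeff (leadingCoeff_ne_zero.2 hQ)
  set N := ∑ j ∈ Finset.range Q.natDegree, (Q.coeff j).natDegree with hN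
  set D := ∑ j ∈ Finset.range Q.natDegree, ∑ i ∈ Finset.range ((Q.coeff j).natDegree + 1), ‖(Q.coeff j).coeff i‖ with hD
  refine ⟨D / m + 1, N, max R 1, fun z hz => ?_⟩
  have hz1 : 1 ≤ ‖z‖ := (le_max_right _ _).trans hz
  have hzR := hR z ((le_max_left _ _).trans hz)
  have hne : evalRingHom z Q.leadingCoeff ≠ 0 := by
    intro h0
    rw [coe_evalRingHom] at h0
    rw [h0, norm_zero] at hzR
    linarith
  have hdeg : (Q.map (evalRingHom z)).natDegree = Q.natDegree :=
    natDegree_map_of_leadingCoeff_ne_zero _ hne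
  have hlc : (Q.map (evalRingHom z)).leadingCoeff = Q.leadingCoeff.eval z := by
    rw [leadingCoeff, hdeg, coeff_map]; rfl
  have hmap : Q.map (evalRingHom z) ≠ 0 := by
    intro h0
    rw [h0] at hlc
    apply hne
    rw [coe_evalRingHom, ← hlc]; simp
  have hb : ‖f z‖₊ < cauchyBound _ := IsRoot.norm_lt_cauchyBound hmap (a := f z) (h z)
  rw [cauchyBound, hdeg, hlc] at hb
  have hb' : ‖f z‖ < ((Finset.range Q.natDegree).sup (fun j => ‖(Q.map (evalRingHom z)).coeff j‖₊) : NNReal) / ‖Q.leadingCoeff.eval z‖ + 1 := by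
    exact_mod_cast hb
  have hsup : (((Finset.range Q.natDegree).sup (fun j => ‖(Q.map (evalRingHom z)).coeff j‖₊) : NNReal) : ℝ) ≤ D * ‖z‖ ^ N := by
    have h1 : (Finset.range Q.natDegree).sup (fun j => ‖(Q.map (evalRingHom z)).coeff j‖₊) ≤
        ∑ j ∈ Finset.range Q.natDegree, ‖(Q.map (evalRingHom z)).coeff j‖₊ :=
      Finset.sup_le fun j hj => Finset.single_le_sum (f := fun j => ‖(Q.map (evalRingHom z)).coeff j‖₊) (fun _ _ => zero_le) hj
    have h2 : (((Finset.range Q.natDegree).sup (fun j => ‖(Q.map (evalRingHom z)).coeff j‖₊) : NNReal) : ℝ) ≤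
        ∑ j ∈ Finset.range Q.natDegree, ‖(Q.map (evalRingHom z)).coeff j‖ := by
      have h1' := NNReal.coe_le_coe.2 h1
      rw [NNReal.coe_sum] at h1'
      exact h1'
    refine h2.trans ?_
    rw [hD, Finset.sum_mul]
    refine Finset.sum_le_sum fun j hj => ?_
    rw [coeff_map, coe_evalRingHom]
    exact aux_poly_bound _ z hz1 N (Finset.single_le_sum (f := fun j => (Q.coeff j).natDegree) (fun _ _ => Nat.zero_le _) hj)
  have hD0 : 0 ≤ D := by positivity
  have h3 : (1 : ℝ) ≤ ‖z‖ ^ N := one_le_pow₀ hz1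
  calc ‖f z‖ ≤ D * ‖z‖ ^ N / m + 1 := by
        refine hb'.le.trans (add_le_add ?_ le_rfl)
        exact div_le_div₀ (by positivity) hsup hm hzR
    _ ≤ (D / m + 1) * ‖z‖ ^ N := by
        have : D * ‖z‖ ^ N / m = D / m * ‖z‖ ^ N := by ring
        rw [this]; nlinarith

open Polynomial in
lemma aux_bivariate (P : MvPolynomial (Fin 2) ℂ) (hP : P ≠ 0) :
    ∃ Q : ℂ[X][X], Q ≠ 0 ∧ ∀ z w, (Q.map (evalRingHom z)).eval w = MvPolynomial.eval ![z, w] P := by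
  have key : ∀ z w, ((MvPolynomial.aeval ![(C X : ℂ[X][X]), X] P).map (evalRingHom z)).eval w
      = MvPolynomial.eval ![z, w] P := by
    intro z w
    induction P using MvPolynomial.induction_on' with
    | monomial u a =>
      simp [MvPolynomial.aeval_monomial, MvPolynomial.eval_monomial, Finsupp.prod_fintype]
    | add p q hp hq =>
      by_cases h1 : p = 0
      · by_cases h2 : q = 0
        · simp [h1, h2]
        · simpa [h1] using hq h2
      · by_cases h2 : q = 0
        · simpa [h2] using hp h1
        · simp [hp h1, hq h2]
  refine ⟨_, ?_, key⟩
  intro h0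
  apply hP
  apply MvPolynomial.funext
  intro x
  have := key (x 0) (x 1)
  rw [h0] at this
  have hx : ![x 0, x 1] = x := by ext i; fin_cases i <;> rfl
  rw [hx] at this
  simpa using this.symm

lemma aux_series_s2 (c : ℕ → ℂ) (f : ℂ → ℂ) (h : ∀ z, HasSum (fun k => c k * z ^ k) (f z)) :
    HasFPowerSeriesOnBall f (FormalMultilinearSeries.ofScalars ℂ c) 0 ⊤ := by
  refine ⟨?_, by simp, ?_⟩
  · refine ENNReal.le_of_forall_nnreal_lt fun r _ => ?_
    apply FormalMultilinearSeries.le_radius_of_summable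
    have := (h (r : ℂ)).summable.norm
    simpa [FormalMultilinearSeries.ofScalars_norm] using this
  · intro y _
    simpa [FormalMultilinearSeries.ofScalars_apply_eq, mul_comm] using h y

lemma aux_analytic (c : ℕ → ℂ) (f : ℂ → ℂ) (h : ∀ z, HasSum (fun k => c k * z ^ k) (f z)) (x : ℂ) :
    AnalyticAt ℂ f x := (aux_series_s2 c f h).analyticAt_of_mem (by simp)

lemma aux_coeff (c : ℕ → ℂ) (f : ℂ → ℂ) (h : ∀ z, HasSum (fun k => c k * z ^ k) (f z)) (k : ℕ) :
    c k = iteratedDeriv k f 0 / k.factorial := by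
  have h1 := (aux_series_s2 c f h).hasFPowerSeriesAt
  have h2 := (aux_analytic c f h 0).hasFPowerSeriesAt
  have h3 := FormalMultilinearSeries.ofScalars_series_injective ℂ ℂ
    (h1.eq_formalMultilinearSeries h2)
  exact congrFun h3 k

lemma aux_transc_s2 (c : ℕ → ℂ) (f : ℂ → ℂ) (h : ∀ z, HasSum (fun k => c k * z ^ k) (f z))
    (hc : ∀ k, c (k + 1) ≠ 0) :
    ¬ (∃ P : MvPolynomial (Fin 2) ℂ, P ≠ 0 ∧ ∀ z : ℂ, MvPolynomial.eval ![z, f z] P = 0) := by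
  rintro ⟨P, hP, hPf⟩
  obtain ⟨Q, hQ, hQP⟩ := aux_bivariate P hP
  obtain ⟨C, N, R, hb⟩ := aux_growth_s2 Q hQ f (fun z => by rw [hQP, hPf])
  apply hc N
  rw [aux_coeff c f h]
  suffices iteratedDeriv (N + 1) f 0 = 0 by simp [this]
  have hd : Differentiable ℂ f := fun x => (aux_analytic c f h x).differentiableAt
  have hbound : ∀ r : ℝ, max R 1 ≤ r →
      ‖iteratedDeriv (N + 1) f 0‖ ≤ ((N + 1).factorial * C) / r := by
    intro r hr
    have hr1 : 1 ≤ r := (le_max_right _ _).trans hr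
    have hr0 : 0 < r := by linarith
    have := Complex.norm_iteratedDeriv_le_of_forall_mem_sphere_norm_le (c := 0) (N + 1) hr0
      hd.diffContOnCl (C := C * r ^ N) (fun z hz => by
        have hz' : ‖z‖ = r := by simpa using hz
        have := hb z (by rw [hz']; exact (le_max_left _ _).trans hr)
        rwa [hz'] at this)
    refine this.trans (le_of_eq ?_)
    field_simp
    ring
  have ht : Filter.Tendsto (fun r : ℝ => ((N + 1).factorial * C) / r) Filter.atTop (nhds 0) :=
    Filter.Tendsto.const_div_atTop Filter.tendsto_id _
  have := ge_of_tendsto ht ((Filter.eventually_ge_atTop (max R 1)).mono hbound)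
  exact norm_le_zero_iff.1 this

lemma aux_dense (S : Set ℂ) (hS : Dense S) (a b : ℂ) (hb : b ≠ 0) (r : ℝ) (hr : 0 < r) :
    ∃ e : ℂ, ‖e‖ < r ∧ a + e * b ∈ S := by
  have hb' : 0 < ‖b‖ := norm_pos_iff.2 hb
  obtain ⟨s, hs, hd⟩ := hS.exists_dist_lt a (ε := r * ‖b‖) (by positivity)
  refine ⟨(s - a) / b, ?_, ?_⟩
  · rw [norm_div, div_lt_iff₀ hb', ← dist_eq_norm, dist_comm]; exact hd
  · rw [div_mul_cancel₀ _ hb]; simpa using hs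

open Polynomial in
lemma aux_hasSum (q : ℂ[X]) (z : ℂ) : HasSum (fun k => q.coeff k * z ^ k) (q.eval z) := by
  rw [eval_eq_sum_range]
  apply hasSum_sum_of_ne_finset_zero
  intro k hk
  rw [coeff_eq_zero_of_natDegree_lt (by simp at hk; omega), zero_mul]

open Polynomial in
lemma aux_summ (q : ℂ[X]) (R : ℝ) : Summable (fun k => ‖q.coeff k‖ * R ^ k) := by
  apply summable_of_ne_finset_zero (s := Finset.range (q.natDegree + 1))
  intro k hk
  rw [coeff_eq_zero_of_natDegree_lt (by simp at hk; omega), norm_zero, zero_mul]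

open Polynomial in
lemma aux_small (B1 B2 : ℂ[X]) (R η : ℝ) (hη : 0 < η) :
    ∃ r > 0, ∀ e d : ℂ, ‖e‖ < r → ‖d‖ < r →
      ∑' k, ‖(C e * B1 + C d * B2).coeff k‖ * R ^ k ≤ η := by
  set D := max B1.natDegree B2.natDegree + 1
  have htsum : ∀ e d : ℂ, ∑' k, ‖(C e * B1 + C d * B2).coeff k‖ * R ^ k =
      ∑ k ∈ Finset.range D, ‖e * B1.coeff k + d * B2.coeff k‖ * R ^ k := by
    intro e d
    simp only [coeff_add, coeff_C_mul]
    apply tsum_eq_sum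
    intro k hk
    have hk' : D ≤ k := by simpa using hk
    have h1 : B1.natDegree < k := by have := le_max_left B1.natDegree B2.natDegree; omega
    have h2 : B2.natDegree < k := by have := le_max_right B1.natDegree B2.natDegree; omega
    simp [coeff_eq_zero_of_natDegree_lt h1, coeff_eq_zero_of_natDegree_lt h2]
  have hc : Continuous (fun x : ℂ × ℂ =>
      ∑ k ∈ Finset.range D, ‖x.1 * B1.coeff k + x.2 * B2.coeff k‖ * R ^ k) := by fun_prop
  have h0 := hc.tendsto 0
  simp only [Prod.fst_zero, Prod.snd_zero, zero_mul, add_zero, norm_zero, Finset.sum_const_zero] at h0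
  obtain ⟨r, hr, h⟩ := Metric.eventually_nhds_iff.1 (h0.eventually_lt_const hη)
  refine ⟨r, hr, fun e d he hd => ?_⟩
  rw [htsum]
  refine (h (y := (e, d)) ?_).le
  rw [dist_zero_right, Prod.norm_mk]
  exact max_lt he hd

open Polynomial in
lemma aux_step_s2 (K E : Set ℂ) (hK : Dense K) (hE : Dense E) (B f : ℂ[X]) (n : ℕ) (a : ℂ)
    (hn : B.coeff n = 0) (hn1 : B.coeff (n + 1) ≠ 0) (ha : a ≠ 0) (hB : B.eval a ≠ 0)
    (R η : ℝ) (hη : 0 < η) :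
    ∃ q : ℂ[X], B ∣ q ∧ (f + q).coeff (n + 1) ∈ K ∧ (f + q).eval a ∈ E ∧
      ∑' k, ‖q.coeff k‖ * R ^ k ≤ η := by
  obtain ⟨r, hr, h⟩ := aux_small B (X * B) R η hη
  obtain ⟨e, he, heK⟩ := aux_dense K hK (f.coeff (n + 1)) (B.coeff (n + 1)) hn1 r hr
  obtain ⟨d, hd, hdE⟩ := aux_dense E hE (f.eval a + e * B.eval a) (a * B.eval a)
    (mul_ne_zero ha hB) r hr
  refine ⟨C e * B + C d * (X * B), ?_, ?_, ?_, h e d he hd⟩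
  · exact dvd_add (dvd_mul_left _ _) ((dvd_mul_left B X).mul_left _)
  · simpa [coeff_X_mul, hn] using heK
  · simpa [add_assoc] using hdE

open Polynomial in
set_option maxHeartbeats 2000000 in
lemma aux_main (K : ℕ → Set ℂ) (hK : ∀ n, Dense (K n)) (E : ℕ → Set ℂ) (hE : ∀ n, Dense (E n))
    (a : ℕ → ℂ) (ha : ∀ n, a n ≠ 0) (hinj : Function.Injective a) (c0 : ℂ) :
    ∃ (c : ℕ → ℂ) (f : ℂ → ℂ), c 0 = c0 ∧ (∀ k, c (k + 1) ∈ K k) ∧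
      (∀ z, HasSum (fun k => c k * z ^ k) (f z)) ∧ ∀ n, f (a n) ∈ E n := by
  let B : ℕ → ℂ[X] := fun n => (∏ i ∈ Finset.range n, (X - C (a i))) * X ^ (n + 1)
  have hBn : ∀ n, (B n).coeff n = 0 := fun n => by
    simp only [B, coeff_mul_X_pow', if_neg (Nat.not_succ_le_self n)]
  have hBn1 : ∀ n, (B n).coeff (n + 1) ≠ 0 := fun n => by
    simp only [B, coeff_mul_X_pow', le_refl, if_true, Nat.sub_self]
    rw [coeff_zero_eq_eval_zero, eval_prod]
    exact Finset.prod_ne_zero_iff.2 fun i _ => by simpa using ha i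
  have hBa : ∀ n, (B n).eval (a n) ≠ 0 := fun n => by
    simp only [B, eval_mul, eval_pow, eval_X, eval_prod]
    refine mul_ne_zero (Finset.prod_ne_zero_iff.2 fun i hi => ?_) (pow_ne_zero _ (ha n))
    simp only [eval_sub, eval_X, eval_C, sub_ne_zero]
    intro h
    have := hinj h
    simp at hi; omega
  have hstep : ∀ (n : ℕ) (f : ℂ[X]), ∃ q : ℂ[X], B n ∣ q ∧ (f + q).coeff (n + 1) ∈ K n ∧
      (f + q).eval (a n) ∈ E n ∧ ∑' k, ‖q.coeff k‖ * (n : ℝ) ^ k ≤ (1 / 2) ^ n := fun n f =>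
    aux_step_s2 (K n) (E n) (hK n) (hE n) (B n) f n (a n) (hBn n) (hBn1 n) (ha n) (hBa n) n _
      (by positivity)
  choose q hqB hqK hqE hqs using hstep
  let s : ℕ → ℂ[X] := fun n => Nat.rec (C c0) (fun n f => f + q n f) n
  let Q : ℕ → ℂ[X] := fun n => q n (s n)
  have hs0 : s 0 = C c0 := rfl
  have hs : ∀ n, s (n + 1) = s n + Q n := fun n => rfl
  have hsum : ∀ n, s n = C c0 + ∑ i ∈ Finset.range n, Q i := by
    intro n
    induction n with
    | zero => simp [hs0]
    | succ n ih => rw [hs, Finset.sum_range_succ, ih, add_assoc]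
  have hQc : ∀ n k, k ≤ n → (Q n).coeff k = 0 := by
    intro n k hk
    have : X ^ (n + 1) ∣ Q n := (dvd_mul_left _ _).trans (hqB n (s n))
    exact X_pow_dvd_iff.1 this k (by omega)
  have hQa : ∀ n m, m < n → (Q n).eval (a m) = 0 := by
    intro n m hm
    obtain ⟨t, ht⟩ := hqB n (s n)
    change Q n = _ at ht
    rw [ht, eval_mul, eval_mul, eval_prod,
      Finset.prod_eq_zero (Finset.mem_range.2 hm) (by simp)]
    simp
  -- double sums
  have hF : ∀ z : ℂ, Summable (fun p : ℕ × ℕ => (Q p.1).coeff p.2 * z ^ p.2) := by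
    intro z
    apply Summable.of_norm
    rw [summable_prod_of_nonneg (fun _ => norm_nonneg _)]
    simp only [norm_mul, norm_pow]
    refine ⟨fun n => aux_summ _ _, ?_⟩
    apply Summable.of_norm_bounded_eventually_nat (g := fun n => (1 / 2 : ℝ) ^ n)
      (summable_geometric_of_lt_one (by norm_num) (by norm_num))
    obtain ⟨n0, hn0⟩ := exists_nat_ge ‖z‖
    filter_upwards [Filter.eventually_ge_atTop n0] with n hn
    have hzn : ‖z‖ ≤ n := hn0.trans (by exact_mod_cast hn)
    rw [Real.norm_of_nonneg (tsum_nonneg fun k => by positivity)]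
    refine le_trans ?_ (hqs n (s n))
    refine Summable.tsum_le_tsum (fun k => ?_) (aux_summ _ _) (aux_summ _ _)
    change _ ≤ ‖(Q n).coeff k‖ * _
    gcongr
  let c : ℕ → ℂ := fun k => (s k).coeff k
  have hcol : ∀ k, HasSum (fun n => (Q n).coeff k) (c k - (C c0 : ℂ[X]).coeff k) := by
    intro k
    have : c k - (C c0 : ℂ[X]).coeff k = ∑ i ∈ Finset.range k, (Q i).coeff k := by
      simp only [c, hsum k, coeff_add, finsetSum_coeff]; ring
    rw [this]
    apply hasSum_sum_of_ne_finset_zero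
    intro n hn
    exact hQc n k (by simpa using hn)
  let G : ℂ → ℂ := fun z => ∑' p : ℕ × ℕ, (Q p.1).coeff p.2 * z ^ p.2
  have hrow : ∀ z, HasSum (fun n => (Q n).eval z) (G z) := fun z =>
    (hF z).hasSum.prod_fiberwise (fun n => aux_hasSum (Q n) z)
  have hcolG : ∀ z, HasSum (fun k => (c k - (C c0 : ℂ[X]).coeff k) * z ^ k) (G z) := fun z => by
    have h1 := (Equiv.prodComm ℕ ℕ).hasSum_iff.2 (hF z).hasSum
    exact h1.prod_fiberwise (fun k => (hcol k).mul_right _)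
  refine ⟨c, fun z => G z + c0, by simp [c, hs0], fun k => hqK k (s k), fun z => ?_, fun n => ?_⟩
  · have := (hcolG z).add (aux_hasSum (C c0) z)
    simp only [eval_C] at this
    convert this using 2
    ring
  · have h1 : G (a n) = ∑ i ∈ Finset.range (n + 1), (Q i).eval (a n) := by
      refine (hrow (a n)).unique (hasSum_sum_of_ne_finset_zero fun i hi => hQa i n ?_)
      simp at hi; omega
    have h2 : G (a n) + c0 = (s (n + 1)).eval (a n) := by
      rw [h1, hsum (n + 1), eval_add, eval_C, eval_finset_sum, add_comm]
    change G (a n) + c0 ∈ E n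
    rw [h2]
    exact hqE n (s n)



/-- Marques–Ramirez: for a countable `A ⊆ ℂ`, a dense `K ⊆ ℂ`, and
dense targets `E_α ⊆ ℂ` for `α ∈ A` (with `E_0 ∩ K ≠ ∅` if `0 ∈ A`), there are
uncountably many transcendental entire functions `f ∈ K[[z]]` with `f(α) ∈ E_α`
for all `α ∈ A`. -/
theorem uncountably_many_transcendental_entire_functions_one_variable
    (A : Set ℂ) (hA : A.Countable)
    (K : Set ℂ) (hK : Dense K)
    (E : ℂ → Set ℂ) (hE : ∀ α ∈ A, Dense (E α))
    (h0 : (0 : ℂ) ∈ A → (E 0 ∩ K).Nonempty) :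
    ¬ ({f : ℂ → ℂ |
        (∀ x, AnalyticAt ℂ f x) ∧
        ¬ (∃ P : MvPolynomial (Fin 2) ℂ, P ≠ 0 ∧
            ∀ z : ℂ, MvPolynomial.eval ![z, f z] P = 0) ∧
        (∃ c : ℕ → ℂ, (∀ k, c k ∈ K) ∧
            ∀ z : ℂ, HasSum (fun k : ℕ => c k * z ^ k) (f z)) ∧
        (∀ α ∈ A, f α ∈ E α)}).Countable := by
  classical
  intro hcount
  obtain ⟨g, hg⟩ := Set.countable_iff_exists_subset_range.1 hcount
  -- an injective enumeration of a countable infinite set containing `A \ {0}`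
  obtain ⟨a, ha, hinj, hcov⟩ : ∃ a : ℕ → ℂ, (∀ n, a n ≠ 0) ∧ Function.Injective a ∧
      ∀ x ∈ A, x ≠ 0 → ∃ n, a n = x := by
    let A' : Set ℂ := (A \ {0}) ∪ Set.range (fun n : ℕ => (n : ℂ) + 1)
    have hc : A'.Countable := (hA.mono Set.sdiff_subset).union (Set.countable_range _)
    have hi : A'.Infinite := by
      refine (Set.infinite_range_of_injective ?_).mono Set.subset_union_right
      intro m n h
      simpa using h
    have := hc.to_subtype
    have := hi.to_subtype
    obtain ⟨hd⟩ := nonempty_denumerable A'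
    let e : ℕ ≃ A' := (Denumerable.eqv A').symm
    refine ⟨fun n => e n, fun n => ?_, fun m n h => e.injective (Subtype.ext h), fun x hx hx0 => ?_⟩
    · rcases (e n).2 with h | ⟨m, hm⟩
      · exact h.2
      · change ((e n : A') : ℂ) ≠ 0
        rw [← hm]; exact Nat.cast_add_one_ne_zero m
    · refine ⟨e.symm ⟨x, Or.inl ⟨hx, hx0⟩⟩, by simp⟩
  obtain ⟨c0, hc0K, hc0E⟩ : ∃ c0, c0 ∈ K ∧ ((0 : ℂ) ∈ A → c0 ∈ E 0) := by
    by_cases h : (0 : ℂ) ∈ A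
    · obtain ⟨x, hx1, hx2⟩ := h0 h
      exact ⟨x, hx2, fun _ => hx1⟩
    · obtain ⟨x, hx⟩ := hK.nonempty
      exact ⟨x, hx, fun h' => absurd h' h⟩
  let b : ℕ → ℂ := fun k => iteratedDeriv (k + 1) (g k) 0 / (k + 1).factorial
  obtain ⟨c, f, hcz, hcK, hf, hfE⟩ := aux_main (fun k => K \ {0, b k})
    (fun k => hK.sdiff_finite (by simp))
    (fun n => if a n ∈ A then E (a n) else Set.univ)
    (fun n => by
      split_ifs with h
      · exact hE _ h
      · exact dense_univ) a ha hinj c0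
  have hmem : f ∈ Set.range g := by
    apply hg
    refine ⟨aux_analytic c f hf, aux_transc_s2 c f hf (fun k h => ?_), ⟨c, ?_, hf⟩, ?_⟩
    · exact (hcK k).2 (by simp [h])
    · rintro (_ | k)
      · rw [hcz]; exact hc0K
      · exact (hcK k).1
    · intro α hα
      by_cases h : α = 0
      · subst h
        have h1 : f 0 = c 0 := by
          refine (hf 0).unique ?_
          have := hasSum_single (f := fun k => c k * (0 : ℂ) ^ k) 0 (fun k hk => by simp [hk])
          simpa using this
        rw [h1, hcz]
        exact hc0E hα
      · obtain ⟨n, rfl⟩ := hcov α hα h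
        have := hfE n
        simpa only [if_pos hα] using this
  obtain ⟨k, rfl⟩ := hmem
  exact (hcK k).2 (by simp [b, aux_coeff c _ hf])
end

section
/- Let m be a positive integer, let S ⊆ Q̄^m be closed under complex conjugation with (0,…,0) ∈ S, and suppose the complement Q̄^m \ S is enumerated as {v₁, v₂, …} (a finite or infinite injective enumeration). Let K = ℚ* + iℚ = {a + bi : a ∈ ℚ, a ≠ 0, b ∈ ℚ}, and let f ∈ K[[z₁,…,z_m]] be an entire function such that f(u) ∈ Q̄ for every u ∈ S and f(v_n) ∈ K·π^n = {κπ^n : κ ∈ K} for every n. Then the function ψ : ℂ^m → ℂ defined by ψ(z₁,…,z_m) = (f(z₁,…,z_m) + conj(f(conj z₁,…,conj z_m)))/2 is a transcendental entire function belonging to ℚ[[z₁,…,z_m]] whose exceptional set is exactly S, i.e., S_ψ = S. -/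
open scoped BigOperators

theorem piaux_integral_eval {E : Type*} [Field E] (L : ℤ) (x : E) (hx : IsIntegral ℤ ((L : E) * x))
    (g : Polynomial ℤ) (N : ℕ) (hg : g.natDegree ≤ N) :
    IsIntegral ℤ ((L : E) ^ N * Polynomial.aeval x g) := by
  rw [Polynomial.aeval_eq_sum_range' (Nat.lt_succ_of_le hg), Finset.mul_sum]
  refine IsIntegral.sum _ fun i hi => ?_
  have hi' : i ≤ N := by simpa [Nat.lt_succ_iff] using hi
  have : (L : E) ^ N * g.coeff i • x ^ i
      = algebraMap ℤ E (g.coeff i * L ^ (N - i)) * ((L : E) * x) ^ i := by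
    obtain ⟨d, rfl⟩ := Nat.exists_eq_add_of_le hi'
    simp [zsmul_eq_mul, pow_add, mul_pow]
    ring
  rw [this]
  exact isIntegral_algebraMap.mul (hx.pow i)

theorem piaux_int_of_fixed {E : Type*} [Field E] [CharZero E] [Algebra ℚ E] [IsGalois ℚ E]
    (x : E) (hx : IsIntegral ℤ x) (hfix : ∀ σ : E ≃ₐ[ℚ] E, σ x = x) : ∃ M : ℤ, x = M := by
  have h := (InfiniteGalois.mem_bot_iff_fixed (k := ℚ) x).2 hfix
  obtain ⟨q, rfl⟩ := IntermediateField.mem_bot.1 h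
  have hq : IsIntegral ℤ q := by
    have := (isIntegral_algHom_iff ((algebraMap ℚ E).toIntAlgHom)
      (algebraMap ℚ E).injective (x := q)).1 (by simpa using hx)
    exact this
  obtain ⟨y, rfl⟩ := (IsIntegrallyClosed.isIntegral_iff (R := ℤ)).1 hq
  exact ⟨y, by simp⟩

theorem piaux_exists_poly {E : Type*} [Field E] [CharZero E] [Algebra ℚ E]
    [Algebra.IsAlgebraic ℚ E] (B : Finset E) (hB : ∀ b ∈ B, b ≠ 0) :
    ∃ f : Polynomial ℤ, f.eval 0 ≠ 0 ∧ ∀ b ∈ B, Polynomial.aeval b f = 0 := by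
  have h : ∀ b : E, b ≠ 0 → ∃ q : Polynomial ℤ, q.eval 0 ≠ 0 ∧ Polynomial.aeval b q = 0 := by
    intro b hb
    have h1 : IsAlgebraic ℤ b :=
      (IsFractionRing.isAlgebraic_iff ℤ ℚ E).2 (Algebra.IsAlgebraic.isAlgebraic b)
    obtain ⟨q, h0, hq⟩ := h1.exists_nonzero_coeff_and_aeval_eq_zero
      (mem_nonZeroDivisors_of_ne_zero hb)
    exact ⟨q, by rwa [← Polynomial.coeff_zero_eq_eval_zero], hq⟩
  choose! q hq using h
  refine ⟨∏ b ∈ B, q b, ?_, ?_⟩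
  · rw [Polynomial.eval_prod]
    exact Finset.prod_ne_zero_iff.2 fun b hb => (hq b (hB b hb)).1
  · intro b hb
    rw [map_prod]
    exact Finset.prod_eq_zero hb (hq b (hB b hb)).2

theorem piaux_main {E : Type*} [Field E] [CharZero E] [Algebra ℚ E] [IsGalois ℚ E]
    (φ : E →+* ℂ) (A : Finset E) (hA : ∀ σ : E ≃ₐ[ℚ] E, ∀ x ∈ A, σ x ∈ A)
    (a : E) (ha : a ∈ A) (hexp : Complex.exp (φ a) = -1) : False := by
  classical
  -- subset sums
  let s : Finset E → E := fun T => ∑ x ∈ T, x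
  let W := A.powerset.filter fun T => s T ≠ 0
  let Z := A.powerset.filter fun T => ¬ s T ≠ 0
  have hk : 0 < Z.card := Finset.card_pos.2 ⟨∅, by simp [Z, s]⟩
  set k := Z.card with hkdef
  have hsum : (k : ℂ) + ∑ T ∈ W, Complex.exp (φ (s T)) = 0 := by
    have h1 : ∏ x ∈ A, (1 + Complex.exp (φ x)) = 0 :=
      Finset.prod_eq_zero ha (by rw [hexp]; ring)
    rw [Finset.prod_one_add] at h1
    have h2 : ∀ T ∈ A.powerset, ∏ x ∈ T, Complex.exp (φ x) = Complex.exp (φ (s T)) := by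
      intro T _
      rw [← Complex.exp_sum, map_sum]
    rw [Finset.sum_congr rfl h2, ← Finset.sum_filter_add_sum_filter_not A.powerset
      (fun T => s T ≠ 0)] at h1
    have h3 : ∑ T ∈ Z, Complex.exp (φ (s T)) = k := by
      rw [Finset.sum_congr rfl (g := fun _ => (1 : ℂ))]
      · simp [hkdef]
      · intro T hT
        have : s T = 0 := by simpa [Z] using (Finset.mem_filter.1 hT).2
        simp [this]
    rw [← h3, add_comm]
    exact h1
  obtain ⟨f, hf0, hfB⟩ := piaux_exists_poly (W.image s) (by
    intro b hb
    obtain ⟨T, hT, rfl⟩ := Finset.mem_image.1 hb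
    exact (Finset.mem_filter.1 hT).2)
  have hfne : f ≠ 0 := by rintro rfl; simp at hf0
  set L := f.leadingCoeff with hL
  have hL0 : L ≠ 0 := by simpa [hL] using hfne
  set D := f.natDegree with hD
  obtain ⟨c, hc⟩ := LindemannWeierstrass.exp_polynomial_approx f hf0
  have hlim := FloorSemiring.tendsto_mul_pow_div_factorial_sub_atTop
    (W.card : ℝ) (((L.natAbs : ℝ)) ^ D * c) 1
  obtain ⟨N, hN⟩ := Filter.eventually_atTop.1 (hlim.eventually (gt_mem_nhds one_pos))
  obtain ⟨p, hpN, hp⟩ := Nat.exists_infinite_primes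
    (N + (f.eval 0).natAbs + k + L.natAbs + 1)
  obtain ⟨n, hpn, gp, hdeg, happ⟩ := hc p (by omega) hp
  have hsmall := hN p (by omega)
  -- the algebraic integer
  let Y : E := (L : E) ^ (D * p) * ∑ T ∈ W, Polynomial.aeval (s T) gp
  have hYint : IsIntegral ℤ Y := by
    simp only [Y]
    rw [Finset.mul_sum]
    refine IsIntegral.sum _ fun T hT => ?_
    refine piaux_integral_eval L _ ?_ gp _ (hdeg.trans (by rw [mul_comm, ← hD]; omega))
    have := isIntegral_leadingCoeff_smul f (s T) (hfB _ (Finset.mem_image_of_mem _ hT))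
    simpa [zsmul_eq_mul] using this
  have hYfix : ∀ σ : E ≃ₐ[ℚ] E, σ Y = Y := by
    intro σ
    have hs : ∀ T : Finset E, s (T.image σ) = σ (s T) := by
      intro T
      simp only [s]
      rw [Finset.sum_image (fun x _ y _ h => σ.injective h), map_sum]
    simp only [Y, map_mul, map_pow, map_intCast, map_sum]
    congr 1
    refine Finset.sum_bij' (fun T _ => T.image σ) (fun T _ => T.image σ.symm) ?_ ?_ ?_ ?_ ?_
    · intro T hT
      obtain ⟨h1, h2⟩ := Finset.mem_filter.1 hT
      refine Finset.mem_filter.2 ⟨?_, ?_⟩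
      · rw [Finset.mem_powerset] at h1 ⊢
        intro y hy
        obtain ⟨x, hx, rfl⟩ := Finset.mem_image.1 hy
        exact hA σ x (h1 hx)
      · rw [hs]; simpa using h2
    · intro T hT
      obtain ⟨h1, h2⟩ := Finset.mem_filter.1 hT
      refine Finset.mem_filter.2 ⟨?_, ?_⟩
      · rw [Finset.mem_powerset] at h1 ⊢
        intro y hy
        obtain ⟨x, hx, rfl⟩ := Finset.mem_image.1 hy
        exact hA σ.symm x (h1 hx)
      · intro h
        apply h2
        have := hs (T.image σ.symm)
        rw [h, map_zero, Finset.image_image] at this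
        simpa [Function.comp_def] using this
    · intro T _
      rw [Finset.image_image]; simp [Function.comp_def]
    · intro T _
      rw [Finset.image_image]; simp [Function.comp_def]
    · intro T _
      rw [hs]
      exact (Polynomial.aeval_algHom_apply (σ.toAlgHom.toRingHom.toIntAlgHom) (s T) gp).symm
  obtain ⟨M, hM⟩ := piaux_int_of_fixed Y hYint hYfix
  have hMc : (M : ℂ) = (L : ℂ) ^ (D * p) * ∑ T ∈ W, Polynomial.aeval (φ (s T)) gp := by
    have := congrArg φ hM
    simp only [Y, map_mul, map_pow, map_intCast, map_sum] at this
    rw [← this]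
    congr 1
    refine Finset.sum_congr rfl fun T _ => ?_
    exact (Polynomial.aeval_algHom_apply φ.toIntAlgHom (s T) gp).symm
  -- the integer
  set J : ℤ := L ^ (D * p) * n * k + p * M with hJ
  have hJc : (J : ℂ) = -((L : ℂ) ^ (D * p) *
      ∑ T ∈ W, (n • Complex.exp (φ (s T)) - p • Polynomial.aeval (φ (s T)) gp)) := by
    rw [Finset.sum_sub_distrib, ← Finset.smul_sum, ← Finset.smul_sum]
    have : ∑ T ∈ W, Complex.exp (φ (s T)) = -k := by linear_combination hsum
    rw [this, hJ]
    push_cast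
    rw [hMc, zsmul_eq_mul, nsmul_eq_mul]
    ring
  have hJlt : ‖(J : ℂ)‖ < 1 := by
    rw [hJc, norm_neg, norm_mul, norm_pow]
    refine lt_of_le_of_lt ?_ hsmall
    have h1 : ‖∑ T ∈ W, (n • Complex.exp (φ (s T)) - p • Polynomial.aeval (φ (s T)) gp)‖
        ≤ W.card * (c ^ p / (p - 1).factorial) := by
      refine (norm_sum_le_of_le W (f := fun T => n • Complex.exp (φ (s T)) - p • Polynomial.aeval (φ (s T)) gp) (n := fun _ => c ^ p / (p - 1).factorial) fun T hT => ?_).trans (by simp)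
      apply happ
      rw [Polynomial.mem_aroots]
      refine ⟨hfne, ?_⟩
      have := Polynomial.aeval_algHom_apply φ.toIntAlgHom (s T) f
      rw [hfB _ (Finset.mem_image_of_mem _ hT), map_zero] at this
      exact this
    have h2 : ‖(L : ℂ)‖ = (L.natAbs : ℝ) := by
      rw [Complex.norm_intCast, Nat.cast_natAbs, Int.cast_abs]
    rw [h2]
    calc _ ≤ (L.natAbs : ℝ) ^ (D * p) * (W.card * (c ^ p / (p - 1).factorial)) := by gcongr
      _ = _ := by rw [mul_pow, ← pow_mul]; ring
  have hJ0 : J = 0 := by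
    rw [Complex.norm_intCast] at hJlt
    have : |J| < 1 := by exact_mod_cast hJlt
    exact Int.abs_lt_one_iff.1 this
  have hdvd : (p : ℤ) ∣ L ^ (D * p) * n * k := by
    refine ⟨-M, ?_⟩
    linear_combination hJ0
  have hpp : Prime (p : ℤ) := Nat.prime_iff_prime_int.1 hp
  rcases hpp.dvd_or_dvd hdvd with h | h
  · rcases hpp.dvd_or_dvd h with h | h
    · have := Int.natAbs_dvd_natAbs.2 (hpp.dvd_of_dvd_pow h)
      have := Nat.le_of_dvd (Int.natAbs_pos.2 hL0) this
      simp at this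
      omega
    · exact hpn h
  · have := Nat.le_of_dvd hk (Int.natCast_dvd_natCast.1 h)
    omega

theorem piaux_closure {E : Type*} [Field E] [CharZero E] [Algebra ℚ E] [IsAlgClosure ℚ E] :
    ¬ IsAlgebraic ℚ (Real.pi : ℂ) := by
  intro hpi
  have hI : IsAlgebraic ℚ Complex.I := (Complex.isIntegral_rat_I).isAlgebraic
  have hz : IsAlgebraic ℚ ((Real.pi : ℂ) * Complex.I) := hpi.mul hI
  set z := (Real.pi : ℂ) * Complex.I with hzdef
  have : IsAlgClosed E := IsAlgClosure.isAlgClosed ℚ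
  have : Algebra.IsAlgebraic ℚ E := IsAlgClosure.isAlgebraic
  have : IsGalois ℚ E := {}
  let φ : E →ₐ[ℚ] ℂ := IsAlgClosed.lift
  have hm : minpoly ℚ z ≠ 0 := minpoly.ne_zero hz.isIntegral
  have hsp : ((minpoly ℚ z).map (algebraMap ℚ E)).Splits := IsAlgClosed.splits _
  obtain ⟨a, ha⟩ : ∃ a : E, φ a = z := by
    have := hsp.mem_range_of_isRoot (i := (φ : E →+* ℂ)) (x := z)
      (by simpa using hm) (by
        rw [Polynomial.map_map, Polynomial.IsRoot, Polynomial.eval_map]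
        have : ((φ : E →+* ℂ).comp (algebraMap ℚ E)) = algebraMap ℚ ℂ := φ.comp_algebraMap
        rw [this]
        exact minpoly.aeval ℚ z)
    simpa using this
  have hroot : Polynomial.aeval a (minpoly ℚ z) = 0 := by
    have h1 := Polynomial.aeval_algHom_apply φ a (minpoly ℚ z)
    rw [ha, minpoly.aeval] at h1
    exact (map_eq_zero φ).1 h1.symm
  classical
  refine piaux_main (φ : E →+* ℂ) ((minpoly ℚ z).aroots E).toFinset ?_ a ?_ ?_
  · intro σ x hx
    simp only [Multiset.mem_toFinset, Polynomial.mem_aroots] at hx ⊢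
    refine ⟨hm, ?_⟩
    have := Polynomial.aeval_algHom_apply σ.toAlgHom x (minpoly ℚ z)
    rw [hx.2, map_zero] at this
    exact this
  · simp only [Multiset.mem_toFinset, Polynomial.mem_aroots]
    exact ⟨hm, hroot⟩
  · have : (φ : E →+* ℂ) a = z := ha
    rw [this, hzdef, Complex.exp_pi_mul_I]
theorem pi_transcendental : ¬ IsAlgebraic ℚ (Real.pi : ℂ) :=
  @piaux_closure (AlgebraicClosure ℚ) _ _ _ (AlgebraicClosure.instIsAlgClosure ℚ)

theorem traux_conj_analytic {m : ℕ} (f : (Fin m → ℂ) → ℂ) (x : Fin m → ℂ)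
    (h : AnalyticAt ℂ f (fun i => (starRingEnd ℂ) (x i))) :
    AnalyticAt ℂ (fun z : Fin m → ℂ => (starRingEnd ℂ) (f fun i => (starRingEnd ℂ) (z i))) x := by
  obtain ⟨p, r, hp⟩ := h
  let cj : (Fin m → ℂ) → (Fin m → ℂ) := fun z i => (starRingEnd ℂ) (z i)
  have hcj : ∀ z, ‖cj z‖ = ‖z‖ := by
    intro z
    simp [cj, Pi.norm_def]
  have hcjc : Continuous cj := by
    refine continuous_pi fun i => ?_
    exact Complex.continuous_conj.comp (continuous_apply i)
  let q : FormalMultilinearSeries ℂ (Fin m → ℂ) ℂ := fun n =>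
    { toFun := fun w => (starRingEnd ℂ) (p n (fun j => cj (w j)))
      map_update_add' := by
        intro _ w j a b
        have hu : ∀ a : Fin m → ℂ, (fun l => cj (Function.update w j a l))
            = Function.update (fun l => cj (w l)) j (cj a) := by
          intro a
          ext l
          by_cases hl : l = j
          · subst hl; simp
          · simp [hl]
        have hadd : cj (a + b) = cj a + cj b := by ext i; simp [cj]
        rw [hu, hu, hu, hadd, (p n).map_update_add, map_add]
      map_update_smul' := by
        intro _ w j c a
        have hu : ∀ a : Fin m → ℂ, (fun l => cj (Function.update w j a l))
            = Function.update (fun l => cj (w l)) j (cj a) := by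
          intro a
          ext l
          by_cases hl : l = j
          · subst hl; simp
          · simp [hl]
        have hsm : cj (c • a) = (starRingEnd ℂ c) • cj a := by ext i; simp [cj]
        rw [hu, hu, hsm, (p n).map_update_smul]
        simp
      cont := by
        refine Complex.continuous_conj.comp ((p n).cont.comp ?_)
        exact continuous_pi fun j => hcjc.comp (continuous_apply j) }
  have hq : ∀ n w, q n w = (starRingEnd ℂ) (p n (fun j => cj (w j))) := fun n w => rfl
  have hnorm : ∀ n, ‖q n‖ ≤ ‖p n‖ := by
    intro n
    refine ContinuousMultilinearMap.opNorm_le_bound (norm_nonneg _) fun w => ?_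
    rw [hq, RCLike.norm_conj]
    refine ((p n).le_opNorm _).trans (le_of_eq ?_)
    simp [hcj]
  refine ⟨q, r, ?_, hp.r_pos, ?_⟩
  · refine hp.r_le.trans ?_
    refine ENNReal.le_of_forall_nnreal_lt fun s hs => ?_
    obtain ⟨C, _, hC⟩ := p.norm_mul_pow_le_of_lt_radius hs
    exact q.le_radius_of_bound C fun n =>
      (mul_le_mul_of_nonneg_right (hnorm n) (by positivity)).trans (hC n)
  · intro y hy
    have hy' : cj y ∈ Metric.eball (0 : Fin m → ℂ) r := by
      simp only [Metric.mem_eball, edist_zero_right, ← ofReal_norm, hcj] at hy ⊢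
      exact hy
    have h1 := (hp.hasSum hy').map (starRingEnd ℂ) Complex.continuous_conj
    have h2 : (fun i => (starRingEnd ℂ) (x i)) + cj y = fun i => (starRingEnd ℂ) ((x + y) i) := by
      ext i; simp [cj]
    rw [h2] at h1
    exact h1

/-- An entire series with polynomial growth has vanishing coefficients past the growth order. -/
theorem traux_cauchy (g : ℂ → ℂ) (H : ℕ → ℂ) (hg : ∀ t, HasSum (fun n => H n * t ^ n) (g t))
    (N : ℕ) (C R0 : ℝ) (hb : ∀ t : ℂ, R0 ≤ ‖t‖ → ‖g t‖ ≤ C * ‖t‖ ^ N)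
    (n : ℕ) (hn : N < n) : H n = 0 := by
  let p := FormalMultilinearSeries.ofScalars ℂ H
  have hrad : p.radius = ⊤ := by
    refine ENNReal.eq_top_of_forall_nnreal_le fun r => ?_
    refine p.le_radius_of_tendsto (l := 0) ?_
    have := (hg (r : ℂ)).summable.tendsto_atTop_zero.norm
    simpa [p, FormalMultilinearSeries.ofScalars_norm] using this
  have hps : HasFPowerSeriesOnBall g p 0 ⊤ := by
    refine ⟨by rw [hrad], by simp, ?_⟩
    intro y _
    simp only [p, FormalMultilinearSeries.ofScalars_apply_eq, zero_add, smul_eq_mul]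
    exact hg y
  have hdiff : Differentiable ℂ g := by
    have := hps.differentiableOn
    rw [Metric.eball_top_eq_univ] at this
    exact differentiableOn_univ.1 this
  have hder : iteratedDeriv n g 0 = n.factorial * H n := by
    rw [iteratedDeriv_eq_iteratedFDeriv, ← hps.factorial_smul]
    simp [p]
  have hfac : (0 : ℝ) < n.factorial := by exact_mod_cast n.factorial_pos
  have hbound : ∀ R : ℝ, max R0 1 ≤ R → ‖H n‖ ≤ C / R := by
    intro R hR
    have hR1 : 1 ≤ R := (le_max_right _ _).trans hR
    have hRpos : 0 < R := by linarith
    have hC : 0 ≤ C := by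
      have h1 := hb (R : ℂ) (by simpa [abs_of_pos hRpos] using (le_max_left _ _).trans hR)
      have h2 : 0 ≤ C * ‖(R : ℂ)‖ ^ N := (norm_nonneg _).trans h1
      have h3 : 0 < ‖(R : ℂ)‖ ^ N := by
        have : (R : ℂ) ≠ 0 := by exact_mod_cast hRpos.ne'
        positivity
      exact nonneg_of_mul_nonneg_left h2 h3
    have h := Complex.norm_iteratedDeriv_le_of_forall_mem_sphere_norm_le (f := g) (c := 0)
      (C := C * R ^ N) n hRpos hdiff.diffContOnCl (by
        intro z hz
        have hz' : ‖z‖ = R := by simpa using hz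
        have := hb z (by rw [hz']; exact (le_max_left _ _).trans hR)
        rwa [hz'] at this)
    rw [hder, norm_mul, Complex.norm_natCast, mul_div_assoc] at h
    have h' := le_of_mul_le_mul_left h hfac
    refine h'.trans ?_
    rw [div_le_div_iff₀ (by positivity) hRpos, mul_assoc, ← pow_succ]
    exact mul_le_mul_of_nonneg_left (pow_le_pow_right₀ hR1 hn) hC
  have hlim : Filter.Tendsto (fun R : ℝ => C / R) Filter.atTop (nhds 0) :=
    tendsto_const_nhds.div_atTop Filter.tendsto_id
  have := ge_of_tendsto hlim (Filter.eventually_atTop.2 ⟨_, hbound⟩)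
  exact norm_le_zero_iff.1 this

theorem traux_poly_upper (r : Polynomial ℂ) (N : ℕ) (hr : r.natDegree ≤ N) :
    ∃ B : ℝ, 0 ≤ B ∧ ∀ t : ℂ, 1 ≤ ‖t‖ → ‖r.eval t‖ ≤ B * ‖t‖ ^ N := by
  refine ⟨∑ i ∈ Finset.range (N + 1), ‖r.coeff i‖, by positivity, fun t ht => ?_⟩
  rw [Polynomial.eval_eq_sum_range' (Nat.lt_succ_of_le hr), Finset.sum_mul]
  refine norm_sum_le_of_le _ fun i hi => ?_
  rw [norm_mul, norm_pow]
  have : i ≤ N := by simpa [Nat.lt_succ_iff] using hi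
  gcongr

theorem traux_poly_lower (r : Polynomial ℂ) (hr : r ≠ 0) :
    ∃ c R : ℝ, 0 < c ∧ ∀ t : ℂ, R ≤ ‖t‖ → c ≤ ‖r.eval t‖ := by
  by_cases hd : 0 < r.degree
  · have h := r.tendsto_norm_atTop hd (l := Bornology.cobounded ℂ) (z := id)
      tendsto_norm_cobounded_atTop
    have h1 := h.eventually (Filter.eventually_ge_atTop 1)
    rw [(Filter.atTop_basis.cobounded_of_norm).eventually_iff] at h1
    obtain ⟨R, -, hR⟩ := h1
    exact ⟨1, R, one_pos, fun t ht => hR ht⟩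
  · have h0 := Polynomial.eq_C_of_degree_le_zero (not_lt.1 hd)
    refine ⟨‖r.coeff 0‖, 0, ?_, fun t _ => ?_⟩
    · rw [norm_pos_iff]
      intro h
      rw [h] at h0
      simp at h0
      exact hr h0
    · conv_rhs => rw [h0]
      simp

theorem traux_growth {m : ℕ} (ψ : (Fin m → ℂ) → ℂ) (Q : Polynomial (MvPolynomial (Fin m) ℂ))
    (hQ : ∀ z, (Q.map (MvPolynomial.eval z)).eval (ψ z) = 0) (N : ℕ)
    (hN : ∀ j, (Q.coeff j).totalDegree ≤ N)
    (u : Fin m → ℂ) (hu : MvPolynomial.eval u Q.leadingCoeff ≠ 0) :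
    ∃ C R0 : ℝ, ∀ t : ℂ, R0 ≤ ‖t‖ → ‖ψ (t • u)‖ ≤ C * ‖t‖ ^ N := by
  let r : ℕ → Polynomial ℂ := fun j =>
    MvPolynomial.aeval (fun i => Polynomial.C (u i) * Polynomial.X) (Q.coeff j)
  have hr : ∀ j t, (r j).eval t = MvPolynomial.eval (t • u) (Q.coeff j) := by
    intro j t
    simp only [r]
    induction Q.coeff j using MvPolynomial.induction_on with
    | C a => simp
    | add p q hp hq => simp [hp, hq]
    | mul_X p i hp =>
      rw [map_mul, Polynomial.eval_mul, hp, map_mul]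
      congr 1
      simp only [MvPolynomial.aeval_X, Polynomial.eval_mul, Polynomial.eval_C, Polynomial.eval_X,
        MvPolynomial.eval_X, Pi.smul_apply, smul_eq_mul]
      ring
  have hrdeg : ∀ j, (r j).natDegree ≤ N := by
    intro j
    have := MvPolynomial.aeval_natDegree_le (n := 1) (Q.coeff j) (hN j)
      (fun i => Polynomial.C (u i) * Polynomial.X) (fun i => (Polynomial.natDegree_C_mul_le _ _).trans Polynomial.natDegree_X_le)
    simpa using this
  have hrd : r Q.natDegree ≠ 0 := by
    intro h
    have := hr Q.natDegree 1
    rw [h] at this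
    simp at this
    exact hu this.symm
  obtain ⟨c, R, hc, hlow⟩ := traux_poly_lower _ hrd
  choose B hB0 hB using fun j => traux_poly_upper (r j) N (hrdeg j)
  let Bs := ∑ j ∈ Finset.range Q.natDegree, B j
  have hBs : 0 ≤ Bs := Finset.sum_nonneg fun j _ => hB0 j
  refine ⟨Bs / c + 1, max R 1, fun t ht => ?_⟩
  have ht1 : 1 ≤ ‖t‖ := (le_max_right _ _).trans ht
  have hl := hlow t ((le_max_left _ _).trans ht)
  rw [hr] at hl
  have hlead : MvPolynomial.eval (t • u) Q.leadingCoeff ≠ 0 := by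
    intro h
    rw [Polynomial.leadingCoeff] at h
    rw [h] at hl
    simp at hl
    linarith
  have hdeg : (Q.map (MvPolynomial.eval (t • u))).natDegree = Q.natDegree :=
    Polynomial.natDegree_map_of_leadingCoeff_ne_zero _ hlead
  have hne : Q.map (MvPolynomial.eval (t • u)) ≠ 0 := by
    intro h
    have := congrArg (fun q => Polynomial.coeff q Q.natDegree) h
    simp at this
    exact hlead this
  have hroot := Polynomial.IsRoot.norm_lt_cauchyBound hne (hQ (t • u))
  have hroot' : ‖ψ (t • u)‖ < _ := NNReal.coe_lt_coe.2 hroot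
  refine hroot'.le.trans ?_
  rw [Polynomial.cauchyBound, Polynomial.leadingCoeff, hdeg]
  push_cast
  rw [Polynomial.coeff_map]
  have hsup : (((Finset.range Q.natDegree).sup fun x =>
      ‖(Q.map (MvPolynomial.eval (t • u))).coeff x‖₊ : NNReal) : ℝ) ≤ Bs * ‖t‖ ^ N := by
    have : ((Finset.range Q.natDegree).sup fun x =>
      ‖(Q.map (MvPolynomial.eval (t • u))).coeff x‖₊) ≤ Real.toNNReal (Bs * ‖t‖ ^ N) := by
      refine Finset.sup_le fun j hj => ?_
      refine NNReal.le_toNNReal_of_coe_le ?_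
      rw [coe_nnnorm, Polynomial.coeff_map, ← hr]
      refine (hB j t ht1).trans ?_
      gcongr
      exact Finset.single_le_sum (f := B) (fun j _ => hB0 j) hj
    have h3 := NNReal.coe_le_coe.2 this
    rwa [Real.coe_toNNReal _ (by positivity)] at h3
  have h1 : (1 : ℝ) ≤ ‖t‖ ^ N := one_le_pow₀ ht1
  have h2 := div_le_div₀ (by positivity) hsup hc hl
  calc _ ≤ Bs * ‖t‖ ^ N / c + 1 := by
        gcongr
    _ ≤ Bs * ‖t‖ ^ N / c + ‖t‖ ^ N := by gcongr
    _ = _ := by ring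

theorem traux_transcendental {m : ℕ} (hm : 0 < m) (ψ : (Fin m → ℂ) → ℂ) (a : (Fin m → ℕ) → ℂ)
    (ha : ∀ k, a k ≠ 0)
    (hsum : ∀ z : Fin m → ℂ, HasSum (fun k : Fin m → ℕ => a k * ∏ i, z i ^ k i) (ψ z)) :
    ¬ ∃ P : MvPolynomial (Fin (m + 1)) ℂ, P ≠ 0 ∧
        ∀ z : Fin m → ℂ, MvPolynomial.eval (Fin.snoc z (ψ z)) P = 0 := by
  classical
  rintro ⟨P, hP0, hP⟩
  let Q := MvPolynomial.finSuccEquiv ℂ m (MvPolynomial.rename (finRotate (m + 1)) P)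
  have hQ0 : Q ≠ 0 := by
    intro h
    have h1 : MvPolynomial.rename (finRotate (m + 1)) P = 0 := by
      simpa [Q] using h
    exact hP0 (MvPolynomial.rename_injective _ (finRotate (m + 1)).injective (by simpa using h1))
  have hQ : ∀ z, (Q.map (MvPolynomial.eval z)).eval (ψ z) = 0 := by
    intro z
    rw [← MvPolynomial.eval_eq_eval_mv_eval', MvPolynomial.eval_rename, ← hP z,
      Fin.snoc_eq_cons_rotate]
    rfl
  let N := ∑ j ∈ Q.support, (Q.coeff j).totalDegree
  have hN : ∀ j, (Q.coeff j).totalDegree ≤ N := by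
    intro j
    by_cases hj : j ∈ Q.support
    · exact Finset.single_le_sum (f := fun j => (Q.coeff j).totalDegree)
        (fun _ _ => Nat.zero_le _) hj
    · rw [Polynomial.notMem_support_iff.1 hj]; simp
  let n := N + 1
  let H : ℕ → MvPolynomial (Fin m) ℂ := fun n =>
    ∑ k ∈ Finset.piAntidiag Finset.univ n,
      MvPolynomial.monomial (Finsupp.equivFunOnFinite.symm k) (a k)
  have hHeval : ∀ n u, MvPolynomial.eval u (H n) =
      ∑ k ∈ Finset.piAntidiag Finset.univ n, a k * ∏ i, u i ^ k i := by
    intro n u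
    simp only [H, map_sum, MvPolynomial.eval_monomial]
    refine Finset.sum_congr rfl fun k _ => ?_
    rw [Finsupp.prod_fintype _ _ (by simp)]
    simp
  have hline : ∀ (u : Fin m → ℂ) (t : ℂ),
      HasSum (fun n => MvPolynomial.eval u (H n) * t ^ n) (ψ (t • u)) := by
    intro u t
    have h := (hsum (t • u)).tsum_fiberwise (fun k : Fin m → ℕ => ∑ i, k i)
    convert! h using 2 with n
    rw [tsum_congr_set_coe (fun k : Fin m → ℕ => a k * ∏ i, (t • u) i ^ k i)
      (t := ((Finset.piAntidiag Finset.univ n : Finset (Fin m → ℕ)) : Set (Fin m → ℕ)))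
      (by ext k; simp [Finset.mem_piAntidiag]), Finset.tsum_subtype' _ (fun k : Fin m → ℕ => a k * ∏ i, (t • u) i ^ k i),
      hHeval, Finset.sum_mul]
    refine Finset.sum_congr rfl fun k hk => ?_
    have hk' : ∑ i, k i = n := (Finset.mem_piAntidiag.1 hk).1
    simp only [Pi.smul_apply, smul_eq_mul, mul_pow, Finset.prod_mul_distrib,
      Finset.prod_pow_eq_pow_sum, hk']
    ring
  have hHn : H n = 0 := by
    have hprod : H n * Q.leadingCoeff = 0 := by
      refine MvPolynomial.funext fun u => ?_
      rw [map_mul, map_zero]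
      by_cases hu : MvPolynomial.eval u Q.leadingCoeff = 0
      · rw [hu, mul_zero]
      · obtain ⟨C, R0, hb⟩ := traux_growth ψ Q hQ N hN u hu
        rw [traux_cauchy (fun t => ψ (t • u)) _ (hline u) N C R0 hb n (Nat.lt_succ_self N),
          zero_mul]
    exact (mul_eq_zero.1 hprod).resolve_right (by simpa using hQ0)
  let k0 : Fin m → ℕ := Pi.single ⟨0, hm⟩ n
  have hk0 : k0 ∈ Finset.piAntidiag (Finset.univ : Finset (Fin m)) n := by
    simp [Finset.mem_piAntidiag, k0]
  have hcoeff : MvPolynomial.coeff (Finsupp.equivFunOnFinite.symm k0) (H n) = a k0 := by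
    simp only [H, MvPolynomial.coeff_sum, MvPolynomial.coeff_monomial]
    rw [Finset.sum_eq_single k0]
    · simp
    · intro b _ hb
      rw [if_neg]
      intro h
      exact hb (Finsupp.equivFunOnFinite.symm.injective h)
    · intro h; exact absurd hk0 h
  rw [hHn] at hcoeff
  exact ha k0 (by simpa using hcoeff.symm)

theorem piaux_binomial (α β : ℂ) (hα : IsAlgebraic ℚ α) (hβ : IsAlgebraic ℚ β) (hα0 : α ≠ 0)
    (n l : ℕ) (hln : l < n) :
    ¬ IsAlgebraic ℚ (α * (Real.pi : ℂ) ^ n + β * (Real.pi : ℂ) ^ l) := by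
  intro hy
  have hpi : Transcendental (algebraicClosure ℚ ℂ) (Real.pi : ℂ) :=
    Transcendental.algebraicClosure pi_transcendental
  let a' : algebraicClosure ℚ ℂ := ⟨α, mem_algebraicClosure_iff.2 hα⟩
  let b' : algebraicClosure ℚ ℂ := ⟨β, mem_algebraicClosure_iff.2 hβ⟩
  let y' : algebraicClosure ℚ ℂ := ⟨_, mem_algebraicClosure_iff.2 hy⟩
  refine hpi ⟨Polynomial.C a' * Polynomial.X ^ n + Polynomial.C b' * Polynomial.X ^ l
    - Polynomial.C y', ?_, ?_⟩
  · intro h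
    have h1 := congrArg (fun q => Polynomial.coeff q n) h
    have hn0 : n ≠ 0 := by omega
    have hnl : n ≠ l := by omega
    simp [Polynomial.coeff_X_pow, Polynomial.coeff_C, hn0, hnl] at h1
    exact hα0 (congrArg Subtype.val h1)
  · simp [a', b', y']

theorem piaux_conj_algebraic {x : ℂ} (hx : IsAlgebraic ℚ x) :
    IsAlgebraic ℚ ((starRingEnd ℂ) x) := by
  obtain ⟨p, hp0, hp⟩ := hx
  refine ⟨p, hp0, ?_⟩
  have h := Polynomial.aeval_algHom_apply (Complex.conjAe.toAlgHom.restrictScalars ℚ) x p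
  rw [hp, map_zero] at h
  exact h

/-- given `S ⊆ Q̄^m` closed under conjugation with `0 ∈ S`, an injective
enumeration `{v_n}` (indexed by positive integers, finite or infinite) of `Q̄^m \ S`,
`K = ℚ* + iℚ`, and an entire `f ∈ K[[z₁,…,z_m]]` with `f(u) ∈ Q̄` for `u ∈ S` and
`f(v_n) ∈ K·π^n` for all `n`, the function
`ψ(z) = (f(z) + conj(f(conj z₁,…,conj z_m)))/2` is a transcendental entire function in
`ℚ[[z₁,…,z_m]]` whose exceptional set is exactly `S`. -/
theorem psi_is_transcendental_with_exceptional_set_S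
    (m : ℕ) (hm : 0 < m)
    (S : Set (Fin m → ℂ))
    (hSalg : ∀ z ∈ S, ∀ i, IsAlgebraic ℚ (z i))
    (hSconj : ∀ z ∈ S, (fun i => (starRingEnd ℂ) (z i)) ∈ S)
    (hS0 : (0 : Fin m → ℂ) ∈ S)
    (I : Set ℕ) (hIpos : ∀ n ∈ I, 0 < n)
    (v : ℕ → (Fin m → ℂ)) (hvinj : Set.InjOn v I)
    (hvrange : v '' I = {z : Fin m → ℂ | (∀ i, IsAlgebraic ℚ (z i)) ∧ z ∉ S})
    (K : Set ℂ)
    (hK : K = {z : ℂ | ∃ a b : ℚ, a ≠ 0 ∧ z = (a : ℂ) + (b : ℂ) * Complex.I})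
    (f : (Fin m → ℂ) → ℂ) (hfent : ∀ x, AnalyticAt ℂ f x)
    (c : (Fin m → ℕ) → ℂ) (hcK : ∀ k, c k ∈ K)
    (hsum : ∀ z : Fin m → ℂ, HasSum (fun k : Fin m → ℕ => c k * ∏ i, z i ^ k i) (f z))
    (hfS : ∀ u ∈ S, IsAlgebraic ℚ (f u))
    (hfv : ∀ n ∈ I, ∃ κ ∈ K, f (v n) = κ * (Real.pi : ℂ) ^ n) :
    (∀ x, AnalyticAt ℂ
        (fun z : Fin m → ℂ =>
          (f z + (starRingEnd ℂ) (f fun i => (starRingEnd ℂ) (z i))) / 2) x) ∧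
    ¬ (∃ P : MvPolynomial (Fin (m + 1)) ℂ, P ≠ 0 ∧
        ∀ z : Fin m → ℂ,
          MvPolynomial.eval
            (Fin.snoc z ((f z + (starRingEnd ℂ) (f fun i => (starRingEnd ℂ) (z i))) / 2))
            P = 0) ∧
    (∃ c' : (Fin m → ℕ) → ℂ, (∀ k, c' k ∈ Set.range ((↑) : ℚ → ℂ)) ∧
        ∀ z : Fin m → ℂ,
          HasSum (fun k : Fin m → ℕ => c' k * ∏ i, z i ^ k i)
            ((f z + (starRingEnd ℂ) (f fun i => (starRingEnd ℂ) (z i))) / 2)) ∧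
    {z : Fin m → ℂ | (∀ i, IsAlgebraic ℚ (z i)) ∧
        IsAlgebraic ℚ ((f z + (starRingEnd ℂ) (f fun i => (starRingEnd ℂ) (z i))) / 2)}
      = S := by
  subst hK
  choose ca cb hca hcab using hcK
  have hconj2 : ∀ z : Fin m → ℂ,
      (fun i => (starRingEnd ℂ) ((fun i => (starRingEnd ℂ) (z i)) i)) = z := by
    intro z; ext i; simp
  have hψsum : ∀ z : Fin m → ℂ,
      HasSum (fun k : Fin m → ℕ => ((ca k : ℚ) : ℂ) * ∏ i, z i ^ k i)
        ((f z + (starRingEnd ℂ) (f fun i => (starRingEnd ℂ) (z i))) / 2) := by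
    intro z
    have h1 := hsum z
    have h2 := (hsum fun i => (starRingEnd ℂ) (z i)).map (starRingEnd ℂ) Complex.continuous_conj
    have h3 := (h1.add h2).div_const 2
    refine h3.congr_fun ?_
    intro k
    simp only [Function.comp_apply, hcab k, map_mul, map_add, map_prod, map_pow,
      Complex.conj_conj, Complex.conj_I, map_ratCast]
    ring
  have hKalg : ∀ a b : ℚ, IsAlgebraic ℚ ((a : ℂ) + (b : ℂ) * Complex.I) := by
    intro a b
    have hI : IsAlgebraic ℚ Complex.I := Complex.isIntegral_rat_I.isAlgebraic
    exact (isAlgebraic_algebraMap (R := ℚ) (A := ℂ) a).add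
      ((isAlgebraic_algebraMap (R := ℚ) (A := ℂ) b).mul hI)
  have h2alg : IsAlgebraic ℚ (2 : ℂ) := isAlgebraic_algebraMap (R := ℚ) (A := ℂ) 2
  have hKne : ∀ a b : ℚ, a ≠ 0 → (a : ℂ) + (b : ℂ) * Complex.I ≠ 0 := by
    intro a b ha h
    have := congrArg Complex.re h
    simp at this
    exact ha this
  refine ⟨?_, ?_, ⟨fun k => ((ca k : ℚ) : ℂ), fun k => ⟨ca k, rfl⟩, hψsum⟩, ?_⟩
  · intro x
    exact ((hfent x).add (traux_conj_analytic f x (hfent _))).div_const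
  · exact traux_transcendental hm _ (fun k => ((ca k : ℚ) : ℂ))
      (fun k => by exact_mod_cast hca k) hψsum
  · ext z
    simp only [Set.mem_ofPred_eq]
    constructor
    · rintro ⟨hz, hψ⟩
      by_contra hzS
      have hψ2 : IsAlgebraic ℚ (f z + (starRingEnd ℂ) (f fun i => (starRingEnd ℂ) (z i))) := by
        have := hψ.mul h2alg
        rwa [div_mul_cancel₀ _ (two_ne_zero)] at this
      have hzv : z ∈ v '' I := by rw [hvrange]; exact ⟨hz, hzS⟩
      have hcv : (fun i => (starRingEnd ℂ) (z i)) ∈ v '' I := by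
        rw [hvrange]
        refine ⟨fun i => piaux_conj_algebraic (hz i), fun h => hzS ?_⟩
        have := hSconj _ h
        rwa [hconj2] at this
      obtain ⟨n, hn, hnz⟩ := hzv
      obtain ⟨l, hl, hlz⟩ := hcv
      obtain ⟨κ, ⟨a, b, ha, rfl⟩, hfn⟩ := hfv n hn
      obtain ⟨κ', ⟨a', b', ha', rfl⟩, hfl⟩ := hfv l hl
      rw [hnz] at hfn
      rw [hlz] at hfl
      have hconjK : (starRingEnd ℂ) (f fun i => (starRingEnd ℂ) (z i))
          = ((a' : ℂ) + ((-b' : ℚ) : ℂ) * Complex.I) * (Real.pi : ℂ) ^ l := by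
        rw [hfl]
        simp [Complex.conj_ofReal]
      rw [hfn, hconjK] at hψ2
      rcases lt_trichotomy n l with h | h | h
      · rw [add_comm] at hψ2
        exact piaux_binomial _ _ (hKalg _ _) (hKalg _ _) (hKne _ _ ha') l n h hψ2
      · subst h
        have hzz : (fun i => (starRingEnd ℂ) (z i)) = z := by rw [← hlz, hnz]
        rw [hzz, hfn] at hfl
        have hpi0 : (Real.pi : ℂ) ^ n ≠ 0 := pow_ne_zero _ (by exact_mod_cast Real.pi_ne_zero)
        have hab := mul_right_cancel₀ hpi0 hfl
        have haa : a = a' := by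
          have := congrArg Complex.re hab
          simpa using this
        have hbb : b = b' := by
          have := congrArg Complex.im hab
          simpa using this
        subst haa hbb
        refine piaux_binomial (((2 * a : ℚ) : ℂ) + ((0 : ℚ) : ℂ) * Complex.I) 0 (hKalg _ _)
          isAlgebraic_zero (hKne _ _ (by simpa using ha)) n 0 (hIpos n hn) ?_
        convert hψ2 using 1
        push_cast
        ring
      · exact piaux_binomial _ _ (hKalg _ _) (hKalg _ _) (hKne _ _ ha) n l h hψ2
    · intro hz
      refine ⟨hSalg z hz, ?_⟩
      rw [div_eq_mul_inv]
      exact ((hfS z hz).add (piaux_conj_algebraic (hfS _ (hSconj z hz)))).mul h2alg.inv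
end
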